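/- arXiv:2212.13343 — 3 statements merged into one kernel-verified Lean document; each statement's English description precedes it below -/
import Mathlib

section
/- Let μ > 0 and μ + λ ≥ 0. For every p ∈ [2,∞) there exists a constant C = C(μ,λ,p) > 0 such that for every Schwartz vector field u : ℝ² → ℝ² and every Schwartz function P : ℝ² → ℝ, setting F := μΔu + (μ+λ)∇(div u) − ∇P and G := (2μ+λ) div u − P, one has ‖∇G‖_{L^p(ℝ²)} + ‖∇(curl u)‖_{L^p(ℝ²)} ≤ C‖F‖_{L^p(ℝ²)}. -/
open MeasureTheory Real Set Metric

noncomputable section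

abbrev E2 := EuclideanSpace ℝ (Fin 2)

/-- The i-th standard basis vector of ℝ². -/
def e2 (i : Fin 2) : E2 := EuclideanSpace.single i (1 : ℝ)

/-- Divergence of a vector field on ℝ²: div u = ∂₁u¹ + ∂₂u². -/
def div2 (u : E2 → E2) (x : E2) : ℝ := ∑ i, fderiv ℝ u x (e2 i) i

/-- Curl (vorticity) of a vector field on ℝ²: curl u = ∂₂u¹ − ∂₁u². -/
def curl2 (u : E2 → E2) (x : E2) : ℝ :=
  fderiv ℝ u x (e2 1) 0 - fderiv ℝ u x (e2 0) 1

/-- Componentwise Laplacian of a vector field: (Δu)ⁱ = ∑ⱼ ∂ⱼ∂ⱼuⁱ. -/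
def lapVec (u : E2 → E2) (x : E2) (i : Fin 2) : ℝ :=
  ∑ j, fderiv ℝ (fun y => fderiv ℝ u y (e2 j) i) x (e2 j)

/-- The momentum flux F = μΔu + (μ+λ)∇(div u) − ∇P. -/
def NSflux (μ lam : ℝ) (u : E2 → E2) (P : E2 → ℝ) (x : E2) : E2 :=
  (EuclideanSpace.equiv (Fin 2) ℝ).symm fun i =>
    μ * lapVec u x i + (μ + lam) * fderiv ℝ (div2 u) x (e2 i) - fderiv ℝ P x (e2 i)

open scoped SchwartzMap LineDeriv ENNReal Convolution Topology ContDiff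

abbrev CS := 𝓢(E2, ℂ)

def dz (g : E2 → ℂ) (x : E2) : ℂ := fderiv ℝ g x (e2 0) - Complex.I * fderiv ℝ g x (e2 1)
def dzb (g : E2 → ℂ) (x : E2) : ℂ := fderiv ℝ g x (e2 0) + Complex.I * fderiv ℝ g x (e2 1)

def dzS (H : CS) : CS := ∂_{e2 0} H - Complex.I • ∂_{e2 1} H
def dzbS (H : CS) : CS := ∂_{e2 0} H + Complex.I • ∂_{e2 1} H

lemma dzS_apply (H : CS) (x : E2) : dzS H x = dz H x := by
  simp [dzS, dz, SchwartzMap.lineDerivOp_apply_eq_fderiv]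

lemma dzbS_apply (H : CS) (x : E2) : dzbS H x = dzb H x := by
  simp [dzbS, dzb, SchwartzMap.lineDerivOp_apply_eq_fderiv]

lemma lineDeriv_comm_aux (H : CS) (v w : E2) : (∂_{v} (∂_{w} H) : CS) = ∂_{w} (∂_{v} H) := by
  ext x
  have h : ∀ v w : E2, (∂_{v} (∂_{w} H) : CS) x = fderiv ℝ (fderiv ℝ H) x v w := by
    intro v w
    rw [SchwartzMap.lineDerivOp_apply_eq_fderiv]
    have : (⇑(∂_{w} H : CS)) = fun y => fderiv ℝ H y w := by
      ext y; rw [SchwartzMap.lineDerivOp_apply_eq_fderiv]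
    rw [this]
    have hd : DifferentiableAt ℝ (fderiv ℝ H) x :=
      ((H.smooth 2).fderiv_right (m := 1) (by norm_num)).differentiable (by norm_num) x
    rw [fderiv_clm_apply hd (differentiableAt_const _)]
    simp
  rw [h, h]
  have := (H.smooth 2).contDiffAt (x := x)
  exact (this.isSymmSndFDerivAt (by simp)).eq v w

lemma integrable_mul_S (H K : CS) : Integrable (fun x => H x * K x) := by
  have h1 := (H.memLp 2 (volume : Measure E2))
  have h2 := (K.memLp 2 (volume : Measure E2))
  exact MemLp.integrable_mul h1 h2

/-- Null Lagrangian identity. -/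
lemma jacobian_zero (H K : CS) :
    ∫ x, (∂_{e2 1} H : CS) x * (∂_{e2 0} K : CS) x = ∫ x, (∂_{e2 0} H : CS) x * (∂_{e2 1} K : CS) x := by
  rw [SchwartzMap.integral_mul_lineDerivOp_right_eq_neg_left,
    SchwartzMap.integral_mul_lineDerivOp_right_eq_neg_left, lineDeriv_comm_aux]

lemma duality (H K : CS) : ∫ x, dzb H x * dz K x = ∫ x, dz H x * dzb K x := by
  have e : ∀ x, dzb H x * dz K x = dz H x * dzb K x +
      (2 * Complex.I) * ((∂_{e2 1} H : CS) x * (∂_{e2 0} K : CS) x)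
      - (2 * Complex.I) * ((∂_{e2 0} H : CS) x * (∂_{e2 1} K : CS) x) := by
    intro x
    simp only [SchwartzMap.lineDerivOp_apply_eq_fderiv, dz, dzb]
    ring
  have i1 : Integrable (fun x => dz H x * dzb K x) := by
    simpa only [dzS_apply, dzbS_apply] using integrable_mul_S (dzS H) (dzbS K)
  have i2 := (integrable_mul_S (∂_{e2 1} H) (∂_{e2 0} K)).const_mul (2 * Complex.I)
  have i3 := (integrable_mul_S (∂_{e2 0} H) (∂_{e2 1} K)).const_mul (2 * Complex.I)
  simp_rw [e]
  have i12 : Integrable (fun x => dz H x * dzb K x +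
      (2 * Complex.I) * ((∂_{e2 1} H : CS) x * (∂_{e2 0} K : CS) x)) := i1.add i2
  rw [integral_sub i12 i3, integral_add i1 i2, integral_const_mul, integral_const_mul,
    jacobian_zero]
  ring

def conjS (H : CS) : CS := SchwartzMap.postcompCLM (𝕜 := ℝ) (Complex.conjCLE : ℂ →L[ℝ] ℂ) H

lemma conjS_fderiv (H : CS) (x v : E2) : fderiv ℝ (conjS H) x v = (starRingEnd ℂ) (fderiv ℝ H x v) := by
  have h1 : (⇑(conjS H)) = (Complex.conjCLE : ℂ →L[ℝ] ℂ) ∘ H := by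
    ext y; simp [conjS]
  rw [h1, fderiv_comp x (ContinuousLinearMap.differentiableAt _) H.differentiableAt,
    ContinuousLinearMap.fderiv]
  simp

lemma energy (H : CS) : ∫ x, ‖dzb H x‖ ^ 2 = ∫ x, ‖dz H x‖ ^ 2 := by
  have h := duality (conjS H) H
  have a1 : ∀ x, dzb (conjS H) x * dz H x = ((‖dz H x‖ ^ 2 : ℝ) : ℂ) := by
    intro x
    have : dzb (conjS H) x = (starRingEnd ℂ) (dz H x) := by
      simp [dzb, dz, conjS_fderiv]
    rw [this, mul_comm, Complex.mul_conj, Complex.normSq_eq_norm_sq]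
  have a2 : ∀ x, dz (conjS H) x * dzb H x = ((‖dzb H x‖ ^ 2 : ℝ) : ℂ) := by
    intro x
    have : dz (conjS H) x = (starRingEnd ℂ) (dzb H x) := by
      simp [dzb, dz, conjS_fderiv, sub_eq_add_neg]
    rw [this, mul_comm, Complex.mul_conj, Complex.normSq_eq_norm_sq]
  simp_rw [a1, a2] at h
  rw [integral_complex_ofReal, integral_complex_ofReal] at h
  exact_mod_cast h.symm

def sg (t : ℝ) : ℝ := Real.smoothTransition (2 * t - 1)
def hh (t : ℝ) : ℝ := deriv sg t
def eta (δ : ℝ) (y : E2) : ℝ := (δ ^ 2)⁻¹ * hh (‖y‖ ^ 2 / δ ^ 2)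
def ZcL : E2 →L[ℝ] ℂ :=
  Complex.ofRealCLM.comp (EuclideanSpace.proj (0 : Fin 2)) +
    (Complex.I) • (Complex.ofRealCLM.comp (EuclideanSpace.proj (1 : Fin 2)))
def sqk (δ t : ℝ) : ℝ := sg (t / δ ^ 2) / t
def qk (δ : ℝ) (y : E2) : ℂ := ((sqk δ (‖y‖ ^ 2) : ℝ) : ℂ) * ZcL y

lemma ZcL_apply (y : E2) : ZcL y = (y 0 : ℂ) + Complex.I * (y 1 : ℂ) := by
  simp [ZcL]

lemma sg_contDiff : ContDiff ℝ ∞ sg := by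
  unfold sg
  exact Real.smoothTransition.contDiff.comp (by fun_prop)

lemma sg_zero {t : ℝ} (ht : t ≤ 1 / 2) : sg t = 0 :=
  Real.smoothTransition.zero_of_nonpos (by linarith)

lemma sg_one {t : ℝ} (ht : 1 ≤ t) : sg t = 1 :=
  Real.smoothTransition.one_of_one_le (by linarith)

lemma sg_mono : Monotone sg := fun a b h => Real.smoothTransition.monotone (by linarith)

lemma sg_hasDeriv (t : ℝ) : HasDerivAt sg (hh t) t :=
  (sg_contDiff.differentiable (by simp) t).hasDerivAt

lemma hh_contDiff : ContDiff ℝ ∞ hh := by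
  unfold hh
  exact ((contDiff_infty_iff_deriv).1 sg_contDiff).2

lemma hh_nonneg (t : ℝ) : 0 ≤ hh t := sg_mono.deriv_nonneg

lemma hh_zero_of_lt {t : ℝ} (ht : t < 1 / 2) : hh t = 0 := by
  have : sg =ᶠ[𝓝 t] fun _ => 0 := by
    filter_upwards [Iio_mem_nhds ht] with s hs using sg_zero (le_of_lt hs)
  unfold hh
  rw [this.deriv_eq]; simp

lemma hh_zero_of_gt {t : ℝ} (ht : 1 < t) : hh t = 0 := by
  have : sg =ᶠ[𝓝 t] fun _ => 1 := by
    filter_upwards [Ioi_mem_nhds ht] with s hs using sg_one (le_of_lt hs)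
  unfold hh
  rw [this.deriv_eq]; simp

lemma hh_bdd : ∃ C : ℝ, 0 < C ∧ ∀ t, hh t ≤ C := by
  have hc : HasCompactSupport hh := by
    refine HasCompactSupport.intro (isCompact_Icc (a := (1/2 : ℝ)) (b := 1)) ?_
    intro x hx
    rw [mem_Icc, not_and_or, not_le, not_le] at hx
    exact hx.elim hh_zero_of_lt hh_zero_of_gt
  obtain ⟨C, hC⟩ := hc.exists_bound_of_continuous hh_contDiff.continuous
  refine ⟨max C 1, by positivity, fun t => ?_⟩
  exact (le_abs_self _).trans ((hC t).trans (le_max_left _ _))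

lemma eta_contDiff (δ : ℝ) : ContDiff ℝ ∞ (eta δ) := by
  unfold eta
  exact contDiff_const.mul (hh_contDiff.comp ((contDiff_norm_sq ℝ).div_const _))

lemma eta_nonneg (δ : ℝ) (y : E2) : 0 ≤ eta δ y :=
  mul_nonneg (by positivity) (hh_nonneg _)

lemma eta_zero {δ : ℝ} (hδ : 0 < δ) {y : E2} (hy : δ < ‖y‖) : eta δ y = 0 := by
  unfold eta
  rw [hh_zero_of_gt, mul_zero]
  rw [lt_div_iff₀ (by positivity), one_mul]
  gcongr

lemma eta_neg (δ : ℝ) (y : E2) : eta δ (-y) = eta δ y := by simp [eta]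

lemma eta_hasCompactSupport {δ : ℝ} (hδ : 0 < δ) : HasCompactSupport (eta δ) := by
  refine HasCompactSupport.intro (isCompact_closedBall (0 : E2) δ) ?_
  intro x hx
  apply eta_zero hδ
  simpa using hx

lemma eta_scale {δ : ℝ} (hδ : 0 < δ) (y : E2) : eta δ (δ • y) = (δ ^ 2)⁻¹ * eta 1 y := by
  unfold eta
  rw [norm_smul, Real.norm_of_nonneg hδ.le, mul_pow]
  congr 2
  field_simp

lemma integral_eta_smul {δ : ℝ} (hδ : 0 < δ) (g : E2 → ℂ) :
    ∫ y, g y * (eta δ y : ℂ) = ∫ y, g (δ • y) * (eta 1 y : ℂ) := by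
  have h := Measure.integral_comp_smul (volume : Measure E2) (fun y => g y * (eta δ y : ℂ)) δ
  simp only [eta_scale hδ, finrank_euclideanSpace, Fintype.card_fin] at h
  rw [abs_of_pos (by positivity)] at h
  have h2 : ∫ y, g y * (eta δ y : ℂ) = (δ ^ 2) • ((δ ^ 2)⁻¹ • ∫ y, g y * (eta δ y : ℂ)) := by
    rw [smul_smul, mul_inv_cancel₀ (by positivity), one_smul]
  rw [h2, ← h, ← integral_smul]
  congr 1
  ext y
  have : (δ : ℂ) ≠ 0 := by exact_mod_cast hδ.ne'
  simp only [Complex.real_smul]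
  push_cast
  field_simp

def c0 : ℝ := ∫ y, eta 1 y

lemma c0_pos : 0 < c0 := by
  have hex : ∃ t, hh t ≠ 0 := by
    by_contra! hcon
    have := is_const_of_deriv_eq_zero (f := sg) (sg_contDiff.differentiable (by simp)) hcon 0 1
    rw [sg_zero (by norm_num), sg_one le_rfl] at this
    norm_num at this
  obtain ⟨t, ht⟩ := hex
  have ht0 : 0 ≤ t := by
    by_contra! h
    exact ht (hh_zero_of_lt (by linarith))
  refine (eta_contDiff 1).continuous.integral_pos_of_hasCompactSupport_nonneg_nonzero
    (eta_hasCompactSupport one_pos) (eta_nonneg 1) (x := √t • e2 0) ?_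
  unfold eta
  simp [e2, norm_smul, ht, abs_of_nonneg, ht0]

lemma integral_eta {δ : ℝ} (hδ : 0 < δ) : ∫ y, eta δ y = c0 := by
  have h := integral_eta_smul hδ (fun _ => 1)
  simp only [one_mul] at h
  rw [integral_complex_ofReal, integral_complex_ofReal] at h
  exact_mod_cast h

lemma qk_near_zero {δ : ℝ} (hδ : 0 < δ) : qk δ =ᶠ[𝓝 0] fun _ => 0 := by
  have : ∀ᶠ y : E2 in 𝓝 0, ‖y‖ ^ 2 / δ ^ 2 < 1 / 2 := by
    apply ContinuousAt.eventually_lt (by fun_prop) (by fun_prop)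
    simp
  filter_upwards [this] with y hy
  simp [qk, sqk, sg_zero hy.le]

lemma sqk_hasDeriv {δ t : ℝ} (ht : t ≠ 0) :
    HasDerivAt (sqk δ) ((hh (t / δ ^ 2) * (1 / δ ^ 2) * t - sg (t / δ ^ 2) * 1) / t ^ 2) t := by
  unfold sqk
  have h1 : HasDerivAt (fun t : ℝ => t / δ ^ 2) (1 / δ ^ 2) t := (hasDerivAt_id t).div_const _
  exact (((sg_hasDeriv (t / δ ^ 2)).comp t h1)).div (hasDerivAt_id t) ht

lemma qk_contDiff {δ : ℝ} (hδ : 0 < δ) : ContDiff ℝ ∞ (qk δ) := by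
  rw [contDiff_iff_contDiffAt]
  intro y
  by_cases hy : y = 0
  · subst hy
    exact (contDiffAt_const (c := (0 : ℂ))).congr_of_eventuallyEq (qk_near_zero hδ)
  · unfold qk sqk
    refine ContDiffAt.mul ?_ ZcL.contDiff.contDiffAt
    refine Complex.ofRealCLM.contDiff.contDiffAt.comp y ?_
    refine ContDiffAt.div ?_ (contDiff_norm_sq ℝ).contDiffAt (by simpa using hy)
    exact sg_contDiff.contDiffAt.comp y ((contDiff_norm_sq ℝ).div_const _).contDiffAt

lemma dz_qk {δ : ℝ} (hδ : 0 < δ) (y : E2) : dz (qk δ) y = 2 * (eta δ y : ℂ) := by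
  by_cases hy : y = 0
  · subst hy
    unfold dz
    rw [(qk_near_zero hδ).fderiv_eq]
    simp [eta, hh_zero_of_lt]
  · have ht : ‖y‖ ^ 2 ≠ 0 := by simpa using hy
    have hn : HasFDerivAt (fun y : E2 => ‖y‖ ^ 2) (2 • innerSL ℝ y) y :=
      (hasStrictFDerivAt_norm_sq y).hasFDerivAt
    have h1 := (sqk_hasDeriv (δ := δ) ht).comp_hasFDerivAt y hn
    have h2 := Complex.ofRealCLM.hasFDerivAt.comp y h1
    have h3 := h2.mul (ZcL.hasFDerivAt (x := y))
    have h4 : fderiv ℝ (qk δ) y = _ := h3.fderiv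
    have i0 : inner ℝ y (e2 0) = y 0 := by simp [e2, EuclideanSpace.inner_single_right]
    have i1 : inner ℝ y (e2 1) = y 1 := by simp [e2, EuclideanSpace.inner_single_right]
    have z0 : ZcL (e2 0) = 1 := by simp [ZcL_apply, e2]
    have z1 : ZcL (e2 1) = Complex.I := by simp [ZcL_apply, e2]
    have hnn : (‖y‖ ^ 2 : ℝ) = y 0 ^ 2 + y 1 ^ 2 := by
      rw [EuclideanSpace.norm_sq_eq]; simp
    unfold dz
    rw [h4]
    simp [i0, i1, z0, z1, ZcL_apply]
    unfold sqk eta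
    have hnC : ((‖y‖ : ℝ) : ℂ) ^ 2 = (y 0 : ℂ) ^ 2 + (y 1 : ℂ) ^ 2 := by exact_mod_cast hnn
    have htC : ((‖y‖ : ℝ) : ℂ) ^ 2 ≠ 0 := by exact_mod_cast ht
    have hδC : (δ : ℂ) ≠ 0 := by exact_mod_cast hδ.ne'
    push_cast
    have hI : Complex.I ^ 2 = -1 := Complex.I_sq
    set T : ℂ := ((‖y‖ : ℝ) : ℂ) ^ 2
    have hT4 : ((‖y‖ : ℝ) : ℂ) ^ 4 = T ^ 2 := by ring
    try rw [hT4]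
    field_simp
    generalize ((hh (‖y‖ ^ 2 / δ ^ 2) : ℝ) : ℂ) = a
    generalize ((sg (‖y‖ ^ 2 / δ ^ 2) : ℝ) : ℂ) = s
    linear_combination (-(s * T * (δ : ℂ) ^ 2) - 2 * (y 1 : ℂ) ^ 2 * (T * a - s * (δ : ℂ) ^ 2)) * hI
      - 2 * (T * a - s * (δ : ℂ) ^ 2) * hnC

lemma qk_far {δ : ℝ} (hδ : 0 < δ) {y : E2} (hy : δ ≤ ‖y‖) :
    qk δ y = ((1 / ‖y‖ ^ 2 : ℝ) : ℂ) * ZcL y := by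
  unfold qk sqk
  rw [sg_one]
  rw [le_div_iff₀ (by positivity), one_mul]
  gcongr

lemma cs_weight {α : Type*} [MeasurableSpace α] (m : Measure α) {a w : α → ℝ≥0∞}
    (ha : AEMeasurable a m) (hw : AEMeasurable w m) :
    (∫⁻ x, a x * w x ∂m) ^ 2 ≤ (∫⁻ x, w x ∂m) * ∫⁻ x, a x ^ 2 * w x ∂m := by
  have h := ENNReal.lintegral_mul_le_Lp_mul_Lq m (p := 2) (q := 2)
    (by constructor <;> norm_num) (f := fun x => a x * w x ^ (1 / 2 : ℝ))
    (g := fun x => w x ^ (1 / 2 : ℝ)) (ha.mul (hw.pow_const _)) (hw.pow_const _)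
  have e1 : ∀ x, ((fun x => a x * w x ^ (1 / 2 : ℝ)) * fun x => w x ^ (1 / 2 : ℝ)) x = a x * w x := by
    intro x
    simp only [Pi.mul_apply]
    rw [mul_assoc, ← ENNReal.rpow_add_of_nonneg _ _ (by norm_num) (by norm_num)]
    norm_num
  have e2 : ∀ x, (a x * w x ^ (1 / 2 : ℝ)) ^ (2 : ℝ) = a x ^ 2 * w x := by
    intro x
    rw [ENNReal.mul_rpow_of_nonneg _ _ (by norm_num), ← ENNReal.rpow_mul]
    norm_num
  have e3 : ∀ x, (w x ^ (1 / 2 : ℝ)) ^ (2 : ℝ) = w x := by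
    intro x
    rw [← ENNReal.rpow_mul]; norm_num
  simp_rw [e1, e2, e3] at h
  have h2 : (∫⁻ x, a x * w x ∂m) ^ 2 ≤ _ := pow_le_pow_left' h 2
  refine h2.trans (le_of_eq ?_)
  rw [mul_pow, ← ENNReal.rpow_natCast, ← ENNReal.rpow_mul, ← ENNReal.rpow_natCast,
    ← ENNReal.rpow_mul]
  norm_num
  rw [mul_comm]

lemma cs_plain {α : Type*} [MeasurableSpace α] (m : Measure α) {f g : α → ℂ}
    (hf : AEStronglyMeasurable f m) (hg : AEStronglyMeasurable g m) :
    ‖∫ x, f x * g x ∂m‖ₑ ^ 2 ≤ (∫⁻ x, ‖f x‖ₑ ^ 2 ∂m) * ∫⁻ x, ‖g x‖ₑ ^ 2 ∂m := by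
  have h := ENNReal.lintegral_mul_le_Lp_mul_Lq m (p := 2) (q := 2)
    (by constructor <;> norm_num) hf.enorm hg.enorm
  have h1 : ‖∫ x, f x * g x ∂m‖ₑ ≤ _ := (enorm_integral_le_lintegral_enorm _).trans
    ((le_of_eq (by simp [enorm_mul])).trans h)
  have h2 : ‖∫ x, f x * g x ∂m‖ₑ ^ 2 ≤ _ := pow_le_pow_left' h1 2
  refine h2.trans (le_of_eq ?_)
  rw [mul_pow, ← ENNReal.rpow_natCast, ← ENNReal.rpow_mul, ← ENNReal.rpow_natCast,
    ← ENNReal.rpow_mul]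
  norm_num

def etaC (δ : ℝ) (y : E2) : ℂ := (eta δ y : ℂ)

lemma etaC_contDiff (δ : ℝ) : ContDiff ℝ ∞ (etaC δ) :=
  Complex.ofRealCLM.contDiff.comp (eta_contDiff δ)

lemma etaC_hasCompactSupport {δ : ℝ} (hδ : 0 < δ) : HasCompactSupport (etaC δ) :=
  (eta_hasCompactSupport hδ).comp_left (g := fun t : ℝ => (t : ℂ)) (by simp)

def Mop (δ : ℝ) (φ : E2 → ℂ) : E2 → ℂ := φ ⋆[ContinuousLinearMap.mul ℝ ℂ, volume] (etaC δ)

lemma Mop_apply (δ : ℝ) (φ : E2 → ℂ) (x : E2) : Mop δ φ x = ∫ t, φ t * etaC δ (x - t) := rfl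

lemma Mop_apply_swap (δ : ℝ) (φ : E2 → ℂ) (x : E2) : Mop δ φ x = ∫ t, φ (x - t) * etaC δ t := by
  unfold Mop
  rw [convolution_eq_swap]
  rfl

lemma Mop_contDiff {δ : ℝ} (hδ : 0 < δ) (φ : CS) : ContDiff ℝ ∞ (Mop δ φ) := by
  unfold Mop
  exact (etaC_hasCompactSupport hδ).contDiff_convolution_right _
    φ.continuous.locallyIntegrable (etaC_contDiff δ)

lemma lintegral_eta {δ : ℝ} (hδ : 0 < δ) : ∫⁻ y, ‖etaC δ y‖ₑ = ENNReal.ofReal c0 := by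
  rw [← integral_eta hδ, ofReal_integral_eq_lintegral_ofReal
    ((eta_contDiff δ).continuous.integrable_of_hasCompactSupport (eta_hasCompactSupport hδ))
    (Filter.Eventually.of_forall (eta_nonneg δ))]
  congr 1
  ext y
  rw [← ofReal_norm, etaC, Complex.norm_real, Real.norm_of_nonneg (eta_nonneg _ _)]

lemma lintegral_eta_left {δ : ℝ} (hδ : 0 < δ) (x : E2) :
    ∫⁻ t, ‖etaC δ (x - t)‖ₑ = ENNReal.ofReal c0 := by
  rw [← lintegral_eta hδ]
  exact lintegral_sub_left_eq_self (fun t => ‖etaC δ t‖ₑ) x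

lemma lintegral_eta_right {δ : ℝ} (hδ : 0 < δ) (t : E2) :
    ∫⁻ x, ‖etaC δ (x - t)‖ₑ = ENNReal.ofReal c0 := by
  rw [← lintegral_eta hδ]
  exact lintegral_sub_right_eq_self (fun t => ‖etaC δ t‖ₑ) t

lemma Mop_pt {δ : ℝ} (hδ : 0 < δ) (φ : CS) (x : E2) :
    ‖Mop δ φ x‖ₑ ^ 2 ≤ ENNReal.ofReal c0 * ∫⁻ t, ‖φ t‖ₑ ^ 2 * ‖etaC δ (x - t)‖ₑ := by
  rw [Mop_apply]
  have hc := (etaC_contDiff δ).continuous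
  have h1 : ‖∫ t, φ t * etaC δ (x - t)‖ₑ ≤ ∫⁻ t, ‖φ t‖ₑ * ‖etaC δ (x - t)‖ₑ :=
    (enorm_integral_le_lintegral_enorm _).trans (le_of_eq (by simp [enorm_mul]))
  refine (pow_le_pow_left' h1 2).trans ?_
  rw [← lintegral_eta_left hδ x]
  exact cs_weight _ φ.continuous.enorm.measurable.aemeasurable
    (by have : Continuous fun t => ‖etaC δ (x - t)‖ₑ := by fun_prop
        exact this.measurable.aemeasurable)

lemma Mop_young {δ : ℝ} (hδ : 0 < δ) (φ : CS) :
    ∫⁻ x, ‖Mop δ φ x‖ₑ ^ 2 ≤ ENNReal.ofReal c0 ^ 2 * ∫⁻ t, ‖φ t‖ₑ ^ 2 := by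
  have hc := (etaC_contDiff δ).continuous
  refine (lintegral_mono (Mop_pt hδ φ)).trans ?_
  rw [lintegral_const_mul' _ _ ENNReal.ofReal_ne_top, sq, mul_assoc]
  gcongr
  have hcφ := φ.continuous
  rw [lintegral_lintegral_swap]
  · rw [← lintegral_const_mul' _ _ ENNReal.ofReal_ne_top]
    apply lintegral_mono
    intro t
    simp only
    rw [lintegral_const_mul, lintegral_eta_right hδ, mul_comm]
    have : Continuous fun x => ‖etaC δ (x - t)‖ₑ := by fun_prop
    exact this.measurable
  · have m1 : Continuous fun z : E2 × E2 => ‖φ z.2‖ₑ := by fun_prop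
    have m2 : Continuous fun z : E2 × E2 => ‖etaC δ (z.1 - z.2)‖ₑ := by fun_prop
    exact ((m1.measurable.pow_const 2).mul m2.measurable).aemeasurable

lemma Mop_pt_ball {C : ℝ} (hC : ∀ t, hh t ≤ C) {δ : ℝ} (hδ : 0 < δ) (φ : CS) (x : E2) :
    ‖Mop δ φ x‖ₑ ^ 2 ≤ ENNReal.ofReal (c0 * (C / δ ^ 2)) * ∫⁻ t in closedBall x δ, ‖φ t‖ₑ ^ 2 := by
  refine (Mop_pt hδ φ x).trans ?_
  rw [ENNReal.ofReal_mul c0_pos.le, mul_assoc]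
  gcongr
  rw [← lintegral_indicator measurableSet_closedBall,
    ← lintegral_const_mul' _ _ ENNReal.ofReal_ne_top]
  apply lintegral_mono
  intro t
  simp only
  by_cases ht : t ∈ closedBall x δ
  · rw [indicator_of_mem ht, mul_comm]
    gcongr
    rw [← ofReal_norm, etaC, Complex.norm_real, Real.norm_of_nonneg (eta_nonneg _ _)]
    apply ENNReal.ofReal_le_ofReal
    unfold eta
    rw [show C / δ ^ 2 = (δ ^ 2)⁻¹ * C by ring]
    exact mul_le_mul_of_nonneg_left (hC _) (by positivity)
  · have : etaC δ (x - t) = 0 := by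
      unfold etaC
      rw [eta_zero hδ]; · simp
      rw [mem_closedBall, dist_comm, dist_eq_norm] at ht
      simpa using ht
    simp [this]

lemma Mop_fubini {δ : ℝ} (hδ : 0 < δ) (φ k : CS) :
    ∫ x, φ x * Mop δ k x = ∫ x, k x * Mop δ φ x := by
  simp_rw [Mop_apply, ← integral_const_mul]
  have hc := (etaC_contDiff δ).continuous
  obtain ⟨B, hB⟩ := (etaC_hasCompactSupport hδ).exists_bound_of_continuous hc
  rw [integral_integral_swap]
  · congr 1; ext t
    congr 1; ext x
    have : etaC δ (x - t) = etaC δ (t - x) := by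
      unfold etaC
      rw [← eta_neg, neg_sub]
    rw [this]; ring
  · have h := (φ.integrable (μ := volume)).mul_prod (k.integrable (μ := volume))
    have h2 : Integrable (fun z : E2 × E2 => etaC δ (z.1 - z.2) * (φ z.1 * k z.2))
        (volume.prod volume) := by
      refine h.bdd_mul (c := B) ?_ (Filter.Eventually.of_forall fun z => hB _)
      have : Continuous fun z : E2 × E2 => etaC δ (z.1 - z.2) := by fun_prop
      exact this.aestronglyMeasurable
    refine h2.congr (Filter.Eventually.of_forall fun z => ?_)
    simp [Function.uncurry]; ring

lemma integrable_etaC {δ : ℝ} (hδ : 0 < δ) : Integrable (etaC δ) :=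
  (etaC_contDiff δ).continuous.integrable_of_hasCompactSupport (etaC_hasCompactSupport hδ)

lemma Mop_scaled {δ : ℝ} (hδ : 0 < δ) (φ : CS) (x : E2) :
    Mop δ φ x = ∫ t, φ (x - δ • t) * etaC 1 t := by
  rw [Mop_apply_swap]
  exact integral_eta_smul hδ (fun t => φ (x - t))

lemma Mop_tendsto_pt (φ : CS) (x : E2) :
    Filter.Tendsto (fun δ => Mop δ φ x) (𝓝[>] 0) (𝓝 (c0 * φ x)) := by
  have hc := (etaC_contDiff 1).continuous
  have hcφ := φ.continuous
  obtain ⟨B, hB⟩ := φ.decay 0 0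
  have hB' : ∀ x, ‖φ x‖ ≤ B := by simpa using hB.2
  have h1 : Filter.Tendsto (fun δ : ℝ => ∫ t, φ (x - δ • t) * etaC 1 t) (𝓝[>] 0)
      (𝓝 (∫ t, φ (x - (0 : ℝ) • t) * etaC 1 t)) := by
    refine tendsto_integral_filter_of_dominated_convergence (fun t => B * ‖etaC 1 t‖) ?_ ?_ ?_ ?_
    · refine Filter.Eventually.of_forall fun δ => ?_
      have : Continuous fun t => φ (x - δ • t) * etaC 1 t := by fun_prop
      exact this.aestronglyMeasurable
    · refine Filter.Eventually.of_forall fun δ => Filter.Eventually.of_forall fun t => ?_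
      rw [norm_mul]
      gcongr
      exact hB' _
    · exact (integrable_etaC one_pos).norm.const_mul B
    · refine Filter.Eventually.of_forall fun t => ?_
      have : Continuous fun δ : ℝ => φ (x - δ • t) * etaC 1 t := by fun_prop
      exact (this.tendsto 0).mono_left nhdsWithin_le_nhds
  have h2 : ∫ t, φ (x - (0 : ℝ) • t) * etaC 1 t = c0 * φ x := by
    simp only [zero_smul, sub_zero]
    rw [integral_const_mul, mul_comm]
    congr 1
    unfold etaC c0
    rw [integral_complex_ofReal]
  rw [h2] at h1
  refine h1.congr' ?_
  filter_upwards [self_mem_nhdsWithin] with δ hδ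
  rw [Mop_scaled hδ]

lemma Mop_tendsto (φ k : CS) :
    Filter.Tendsto (fun δ => ∫ x, k x * Mop δ φ x) (𝓝[>] 0) (𝓝 (∫ x, k x * (c0 * φ x))) := by
  obtain ⟨B, hB⟩ := φ.decay 0 0
  have hB' : ∀ x, ‖φ x‖ ≤ B := by simpa using hB.2
  refine tendsto_integral_filter_of_dominated_convergence (fun x => ‖k x‖ * (B * ∫ t, ‖etaC 1 t‖))
    ?_ ?_ ?_ ?_
  · filter_upwards [self_mem_nhdsWithin] with δ hδ
    have := (Mop_contDiff hδ φ).continuous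
    have h : Continuous fun x => k x * Mop δ φ x := k.continuous.mul this
    exact h.aestronglyMeasurable
  · filter_upwards [self_mem_nhdsWithin] with δ hδ
    refine Filter.Eventually.of_forall fun x => ?_
    rw [norm_mul, Mop_scaled hδ, ← integral_const_mul]
    gcongr
    refine norm_integral_le_of_norm_le ((integrable_etaC one_pos).norm.const_mul B) ?_
    refine Filter.Eventually.of_forall fun t => ?_
    rw [norm_mul]
    gcongr
    exact hB' _
  · exact (k.integrable).norm.mul_const _
  · exact Filter.Eventually.of_forall fun x => (Mop_tendsto_pt φ x).const_mul _

def psi (δ r : ℝ) (y : E2) : ℂ := qk δ y - qk r y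

lemma psi_contDiff {δ r : ℝ} (hδ : 0 < δ) (hr : 0 < r) : ContDiff ℝ ∞ (psi δ r) :=
  (qk_contDiff hδ).sub (qk_contDiff hr)

lemma psi_zero {δ r : ℝ} (hδ : 0 < δ) (hr : δ ≤ r) {y : E2} (hy : r ≤ ‖y‖) : psi δ r y = 0 := by
  unfold psi
  rw [qk_far hδ (hr.trans hy), qk_far (hδ.trans_le hr) hy, sub_self]

lemma psi_hasCompactSupport {δ r : ℝ} (hδ : 0 < δ) (hr : δ ≤ r) : HasCompactSupport (psi δ r) := by
  refine HasCompactSupport.intro (isCompact_closedBall (0 : E2) r) ?_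
  intro x hx
  apply psi_zero hδ hr
  simp at hx
  exact hx.le

lemma dz_psi {δ r : ℝ} (hδ : 0 < δ) (hr : 0 < r) (y : E2) :
    dz (psi δ r) y = 2 * (etaC δ y - etaC r y) := by
  have h : fderiv ℝ (psi δ r) y = fderiv ℝ (qk δ) y - fderiv ℝ (qk r) y := by
    unfold psi
    exact fderiv_fun_sub ((qk_contDiff hδ).differentiable (by simp) y)
      ((qk_contDiff hr).differentiable (by simp) y)
  have h1 := dz_qk hδ y
  have h2 := dz_qk hr y
  unfold dz at *
  rw [h]
  simp only [sub_apply, etaC]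
  linear_combination h1 - h2

def PhiF (δ r : ℝ) (φ : E2 → ℂ) : E2 → ℂ := φ ⋆[ContinuousLinearMap.mul ℝ ℂ, volume] (psi δ r)

lemma conv_int {g : E2 → ℂ} (φ : CS) (hg : Continuous g) (hc : HasCompactSupport g) (x : E2) :
    Integrable (fun t => φ t * g (x - t)) :=
  hc.convolutionExists_right (ContinuousLinearMap.mul ℝ ℂ) φ.continuous.locallyIntegrable hg x

lemma fderiv_PhiF {δ r : ℝ} (hδ : 0 < δ) (hr : δ ≤ r) (φ : CS) (x v : E2) :
    fderiv ℝ (PhiF δ r φ) x v = ∫ t, φ t * fderiv ℝ (psi δ r) (x - t) v := by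
  have hs := psi_contDiff hδ (hδ.trans_le hr)
  have h := (psi_hasCompactSupport hδ hr).hasFDerivAt_convolution_right
    (ContinuousLinearMap.mul ℝ ℂ) (μ := volume) φ.continuous.locallyIntegrable
    (hs.of_le (by simp)) x
  unfold PhiF
  rw [h.fderiv, convolution_precompR_apply _ φ.continuous.locallyIntegrable
    ((psi_hasCompactSupport hδ hr).fderiv ℝ) (hs.continuous_fderiv (by simp))]
  rfl

lemma dz_PhiF {δ r : ℝ} (hδ : 0 < δ) (hr : δ ≤ r) (φ : CS) (x : E2) :
    dz (PhiF δ r φ) x = 2 * (Mop δ φ x - Mop r φ x) := by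
  have hr0 := hδ.trans_le hr
  have hs := psi_contDiff hδ hr0
  have hcf := hs.continuous_fderiv (by simp)
  have i : ∀ v : E2, Integrable (fun t => φ t * fderiv ℝ (psi δ r) (x - t) v) := by
    intro v
    have hc : HasCompactSupport (fun y => fderiv ℝ (psi δ r) y v) :=
      (psi_hasCompactSupport hδ hr).fderiv_apply ℝ v
    exact conv_int φ (by fun_prop) hc x
  unfold dz
  rw [fderiv_PhiF hδ hr, fderiv_PhiF hδ hr, Mop_apply, Mop_apply, ← integral_const_mul,
    ← integral_sub (i _) ((i _).const_mul _),
    ← integral_sub (conv_int φ (etaC_contDiff δ).continuous (etaC_hasCompactSupport hδ) x)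
      (conv_int φ (etaC_contDiff r).continuous (etaC_hasCompactSupport hr0) x),
    ← integral_const_mul]
  congr 1
  ext t
  have := dz_psi hδ hr0 (x - t)
  unfold dz at this
  linear_combination (φ t) * this

lemma PhiF_contDiff {δ r : ℝ} (hδ : 0 < δ) (hr : δ ≤ r) (φ : CS) :
    ContDiff ℝ ∞ (PhiF δ r φ) :=
  (psi_hasCompactSupport hδ hr).contDiff_convolution_right _
    φ.continuous.locallyIntegrable (psi_contDiff hδ (hδ.trans_le hr))

lemma PhiF_compact {δ r : ℝ} (hδ : 0 < δ) (hr : δ ≤ r) (φ : CS) (hφ : HasCompactSupport φ) :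
    HasCompactSupport (PhiF δ r φ) :=
  HasCompactSupport.convolution _ hφ (psi_hasCompactSupport hδ hr)

lemma PhiF_zero {δ r : ℝ} (hδ : 0 < δ) (hr : δ ≤ r) (φ : CS) {x0 : E2} {ρ : ℝ}
    (hφ : ∀ x, x ∉ closedBall x0 ρ → φ x = 0) {x : E2} (hx : x ∉ closedBall x0 (ρ + r)) :
    PhiF δ r φ x = 0 := by
  have : PhiF δ r φ x = ∫ t, φ t * psi δ r (x - t) := rfl
  rw [this]
  have h0 : ∀ t, φ t * psi δ r (x - t) = 0 := by
    intro t
    by_cases ht : t ∈ closedBall x0 ρ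
    · rw [psi_zero hδ hr, mul_zero]
      rw [mem_closedBall] at ht hx
      have := dist_triangle x t x0
      rw [dist_eq_norm x t] at this
      linarith
    · rw [hφ t ht, zero_mul]
  simp [h0]

lemma dzb_PhiF_zero {δ r : ℝ} (hδ : 0 < δ) (hr : δ ≤ r) (φ : CS) {x0 : E2} {ρ : ℝ}
    (hφ : ∀ x, x ∉ closedBall x0 ρ → φ x = 0) {x : E2} (hx : x ∉ closedBall x0 (ρ + r)) :
    dzb (PhiF δ r φ) x = 0 := by
  have : PhiF δ r φ =ᶠ[𝓝 x] fun _ => 0 := by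
    filter_upwards [isClosed_closedBall.isOpen_compl.mem_nhds hx] with y hy
    exact PhiF_zero hδ hr φ hφ hy
  unfold dzb
  rw [this.fderiv_eq]
  simp

lemma energy_l (H : CS) : ∫⁻ x, ‖dzb H x‖ₑ ^ 2 = ∫⁻ x, ‖dz H x‖ₑ ^ 2 := by
  have key : ∀ K : CS, ∫⁻ x, ‖K x‖ₑ ^ 2 = ENNReal.ofReal (∫ x, ‖K x‖ ^ 2) := by
    intro K
    rw [ofReal_integral_eq_lintegral_ofReal]
    · congr 1; ext x
      rw [ENNReal.ofReal_pow (norm_nonneg _), ofReal_norm]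
    · exact (K.memLp 2 volume).integrable_norm_pow (by norm_num)
    · exact Filter.Eventually.of_forall fun x => by positivity
  have h1 := key (dzbS H)
  have h2 := key (dzS H)
  simp only [dzbS_apply, dzS_apply] at h1 h2
  rw [h1, h2, energy]

lemma dz_cont (H : CS) : Continuous (dz H) := by
  have : dz H = dzS H := by ext x; rw [dzS_apply]
  rw [this]; exact (dzS H).continuous

lemma dzb_cont (H : CS) : Continuous (dzb H) := by
  have : dzb H = dzbS H := by ext x; rw [dzbS_apply]
  rw [this]; exact (dzbS H).continuous

lemma enorm_sub_sq_le (a b : ℂ) : ‖a - b‖ₑ ^ 2 ≤ 2 * ‖a‖ₑ ^ 2 + 2 * ‖b‖ₑ ^ 2 := by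
  simp only [← ofReal_norm]
  rw [← ENNReal.ofReal_pow (norm_nonneg _), ← ENNReal.ofReal_pow (norm_nonneg _),
    ← ENNReal.ofReal_pow (norm_nonneg _), show (2 : ℝ≥0∞) = ENNReal.ofReal 2 by simp,
    ← ENNReal.ofReal_mul (by norm_num), ← ENNReal.ofReal_mul (by norm_num),
    ← ENNReal.ofReal_add (by positivity) (by positivity)]
  apply ENNReal.ofReal_le_ofReal
  have := norm_sub_le a b
  have h0 := norm_nonneg (a - b)
  nlinarith [sq_nonneg (‖a‖ - ‖b‖)]

lemma local_delta (H φ : CS) {x0 : E2} {r δ : ℝ} (hδ : 0 < δ) (hr : δ ≤ r)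
    (hφ : ∀ x, x ∉ closedBall x0 (6 * r) → φ x = 0) :
    ‖∫ x, dzbS H x * (Mop δ φ x - Mop r φ x)‖ₑ ^ 2 ≤
      (∫⁻ x in closedBall x0 (7 * r), ‖dz H x‖ₑ ^ 2) *
        (4 * ENNReal.ofReal c0 ^ 2 * ∫⁻ x, ‖φ x‖ₑ ^ 2) := by
  have hr0 := hδ.trans_le hr
  have hφc : HasCompactSupport φ :=
    HasCompactSupport.intro (isCompact_closedBall x0 (6 * r)) hφ
  let Φ : CS := (PhiF_compact hδ hr φ hφc).toSchwartzMap (PhiF_contDiff hδ hr φ)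
  have hΦ : (⇑Φ) = PhiF δ r φ := rfl
  have e1 : ∫ x, dzbS H x * (Mop δ φ x - Mop r φ x) = (1 / 2 : ℂ) * ∫ x, dz H x * dzb Φ x := by
    rw [← duality, ← integral_const_mul]
    congr 1; ext x
    rw [dzbS_apply, hΦ, dz_PhiF hδ hr]
    ring
  have e2 : ∫ x, dz H x * dzb Φ x =
      ∫ x, (closedBall x0 (7 * r)).indicator (dz H) x * dzb Φ x := by
    congr 1; ext x
    by_cases hx : x ∈ closedBall x0 (7 * r)
    · rw [indicator_of_mem hx]
    · rw [hΦ, dzb_PhiF_zero hδ hr φ hφ (by convert hx using 2; ring_nf)]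
      simp
  have e3 := cs_plain volume (f := (closedBall x0 (7 * r)).indicator (dz H)) (g := dzb Φ)
    ((dz_cont H).aestronglyMeasurable.indicator measurableSet_closedBall)
    (dzb_cont Φ).aestronglyMeasurable
  have e4 : ∫⁻ x, ‖(closedBall x0 (7 * r)).indicator (dz H) x‖ₑ ^ 2 =
      ∫⁻ x in closedBall x0 (7 * r), ‖dz H x‖ₑ ^ 2 := by
    rw [← lintegral_indicator measurableSet_closedBall]
    congr 1; ext x
    by_cases hx : x ∈ closedBall x0 (7 * r) <;> simp [hx]
  have e5 : ∫⁻ x, ‖dzb Φ x‖ₑ ^ 2 ≤ 4 * (4 * ENNReal.ofReal c0 ^ 2 * ∫⁻ x, ‖φ x‖ₑ ^ 2) := by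
    rw [energy_l, hΦ]
    simp_rw [dz_PhiF hδ hr, enorm_mul, mul_pow]
    have n2 : ‖(2 : ℂ)‖ₑ ^ 2 = 4 := by
      rw [← ofReal_norm, ← ENNReal.ofReal_pow (norm_nonneg _)]; norm_num
    rw [n2, lintegral_const_mul' _ _ (by norm_num)]
    gcongr
    have m1 := (Mop_contDiff hδ φ).continuous.enorm.measurable
    have m2 := (Mop_contDiff hr0 φ).continuous.enorm.measurable
    refine (lintegral_mono fun x => enorm_sub_sq_le _ _).trans ?_
    rw [lintegral_add_left ((m1.pow_const 2).const_mul 2), lintegral_const_mul' _ _ (by norm_num),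
      lintegral_const_mul' _ _ (by norm_num)]
    have y1 := Mop_young hδ φ
    have y2 := Mop_young hr0 φ
    calc _ ≤ 2 * (ENNReal.ofReal c0 ^ 2 * ∫⁻ t, ‖φ t‖ₑ ^ 2)
          + 2 * (ENNReal.ofReal c0 ^ 2 * ∫⁻ t, ‖φ t‖ₑ ^ 2) := by gcongr
      _ = _ := by ring
  rw [e1, e2, enorm_mul, mul_pow]
  rw [e4] at e3
  have n2 : ‖(1 / 2 : ℂ)‖ₑ ^ 2 = 4⁻¹ := by
    rw [← ofReal_norm, ← ENNReal.ofReal_pow (norm_nonneg _)]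
    norm_num
    rw [ENNReal.ofReal_div_of_pos (by norm_num)]
    simp
  rw [n2]
  calc _ ≤ (4⁻¹ : ℝ≥0∞) * ((∫⁻ x in closedBall x0 (7 * r), ‖dz H x‖ₑ ^ 2) *
        (4 * (4 * ENNReal.ofReal c0 ^ 2 * ∫⁻ x, ‖φ x‖ₑ ^ 2))) := by
        gcongr
        exact e3.trans (by gcongr)
    _ = (4⁻¹ * 4 : ℝ≥0∞) * ((∫⁻ x in closedBall x0 (7 * r), ‖dz H x‖ₑ ^ 2) *
        ((4 * ENNReal.ofReal c0 ^ 2 * ∫⁻ x, ‖φ x‖ₑ ^ 2))) := by ring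
    _ = _ := by rw [ENNReal.inv_mul_cancel (by norm_num) (by norm_num), one_mul]

lemma local_dual (H φ : CS) {x0 : E2} {r : ℝ} (hr : 0 < r)
    (hφ : ∀ x, x ∉ closedBall x0 (6 * r) → φ x = 0) :
    ‖∫ x, φ x * (c0 * dzbS H x - Mop r (dzbS H) x)‖ₑ ^ 2 ≤
      (∫⁻ x in closedBall x0 (7 * r), ‖dz H x‖ₑ ^ 2) *
        (4 * ENNReal.ofReal c0 ^ 2 * ∫⁻ x, ‖φ x‖ₑ ^ 2) := by
  have hφc : HasCompactSupport φ :=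
    HasCompactSupport.intro (isCompact_closedBall x0 (6 * r)) hφ
  set k := dzbS H with hk
  have iM : ∀ δ, 0 < δ → Integrable (fun x => k x * Mop δ φ x) := by
    intro δ hδ
    let Ψ : CS := HasCompactSupport.toSchwartzMap (f := Mop δ φ)
      (HasCompactSupport.convolution _ hφc (etaC_hasCompactSupport hδ)) (Mop_contDiff hδ φ)
    exact integrable_mul_S k Ψ
  have i1 : Integrable (fun x => φ x * (c0 * k x)) := by
    have := (integrable_mul_S φ k).const_mul (c0 : ℂ)
    refine this.congr (Filter.Eventually.of_forall fun x => ?_)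
    simp only; ring
  have i2 : Integrable (fun x => φ x * Mop r k x) := by
    have hc : Continuous (fun x => φ x * Mop r k x) :=
      φ.continuous.mul (Mop_contDiff hr k).continuous
    exact hc.integrable_of_hasCompactSupport (hφc.mul_right)
  have e : ∫ x, φ x * (c0 * k x - Mop r k x) =
      (∫ x, k x * (c0 * φ x)) - ∫ x, k x * Mop r φ x := by
    rw [← Mop_fubini hr φ k]
    simp_rw [mul_sub]
    rw [integral_sub i1 i2]
    congr 2; ext x; ring
  have t1 := ((Mop_tendsto φ k).sub_const (∫ x, k x * Mop r φ x)).enorm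
  have t2 := ((ENNReal.continuous_pow 2).tendsto _).comp t1
  rw [e]
  refine le_of_tendsto t2 ?_
  filter_upwards [Ioc_mem_nhdsGT hr] with δ hδ
  simp only [Function.comp]
  rw [← integral_sub (iM δ hδ.1) (iM r hr)]
  simp_rw [← mul_sub]
  exact local_delta H φ hδ.1 hδ.2 hφ

lemma local_est (H : CS) (x0 : E2) {r : ℝ} (hr : 0 < r) :
    ∫⁻ x in closedBall x0 (5 * r), ‖c0 * dzbS H x - Mop r (dzbS H) x‖ₑ ^ 2 ≤
      4 * ENNReal.ofReal c0 ^ 2 * ∫⁻ x in closedBall x0 (7 * r), ‖dz H x‖ₑ ^ 2 := by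
  let χ : ContDiffBump x0 := ⟨5 * r, 6 * r, by positivity, by linarith⟩
  set κ : E2 → ℂ := fun x => c0 * dzbS H x - Mop r (dzbS H) x with hκ
  have hκs : ContDiff ℝ ∞ κ := (contDiff_const.mul (dzbS H).smooth').sub (Mop_contDiff hr _)
  have hconj : ContDiff ℝ ∞ (fun x => (starRingEnd ℂ) (κ x)) :=
    Complex.conjCLE.contDiff.comp hκs
  have hφs : ContDiff ℝ ∞ (fun x => ((χ x : ℝ) : ℂ) * (starRingEnd ℂ) (κ x)) :=
    (Complex.ofRealCLM.contDiff.comp χ.contDiff).mul hconj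
  have hχ0 : ∀ x, x ∉ closedBall x0 (6 * r) → χ x = 0 := by
    intro x hx
    apply χ.zero_of_le_dist
    rw [mem_closedBall, not_le] at hx
    exact hx.le
  have hφc : HasCompactSupport (fun x => ((χ x : ℝ) : ℂ) * (starRingEnd ℂ) (κ x)) :=
    HasCompactSupport.intro (isCompact_closedBall x0 (6 * r)) fun x hx => by simp [hχ0 x hx]
  let φ : CS := hφc.toSchwartzMap hφs
  have hφ : ∀ x, φ x = ((χ x : ℝ) : ℂ) * (starRingEnd ℂ) (κ x) := fun x => rfl
  have key := local_dual H φ hr (x0 := x0) (fun x hx => by simp [hφ, hχ0 x hx])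
  change ‖∫ x, φ x * κ x‖ₑ ^ 2 ≤ _ at key
  have ex : ∀ x, φ x * κ x = ((χ x * ‖κ x‖ ^ 2 : ℝ) : ℂ) := by
    intro x
    rw [hφ, mul_assoc, mul_comm ((starRingEnd ℂ) (κ x)), Complex.mul_conj, Complex.normSq_eq_norm_sq]
    push_cast; rfl
  have hcx : Continuous (fun x => χ x * ‖κ x‖ ^ 2) :=
    χ.continuous.mul (hκs.continuous.norm.pow 2)
  have hix : Integrable (fun x => χ x * ‖κ x‖ ^ 2) :=
    hcx.integrable_of_hasCompactSupport
      (HasCompactSupport.intro (isCompact_closedBall x0 (6 * r)) fun x hx => by simp [hχ0 x hx])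
  have hnn : ∀ x, 0 ≤ χ x * ‖κ x‖ ^ 2 := fun x => mul_nonneg χ.nonneg (by positivity)
  set X := ∫⁻ x, ENNReal.ofReal (χ x * ‖κ x‖ ^ 2) with hX
  have hXtop : X ≠ ⊤ := by
    rw [hX, ← ofReal_integral_eq_lintegral_ofReal hix (Filter.Eventually.of_forall hnn)]
    exact ENNReal.ofReal_ne_top
  have eX : ‖∫ x, φ x * κ x‖ₑ = X := by
    simp_rw [ex]
    rw [integral_complex_ofReal, hX, ← ofReal_integral_eq_lintegral_ofReal hix
      (Filter.Eventually.of_forall hnn), ← ofReal_norm, Complex.norm_real, Real.norm_of_nonneg]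
    exact integral_nonneg hnn
  have eφ : ∫⁻ x, ‖φ x‖ₑ ^ 2 ≤ X := by
    apply lintegral_mono
    intro x
    simp only
    rw [hφ, ← ofReal_norm, ← ENNReal.ofReal_pow (norm_nonneg _)]
    apply ENNReal.ofReal_le_ofReal
    rw [norm_mul, Complex.norm_real, RCLike.norm_conj, Real.norm_of_nonneg χ.nonneg, mul_pow]
    have := χ.nonneg (x := x)
    have := χ.le_one (x := x)
    gcongr
    nlinarith
  rw [eX] at key
  have k2 : X * X ≤ (4 * ENNReal.ofReal c0 ^ 2 * ∫⁻ x in closedBall x0 (7 * r), ‖dz H x‖ₑ ^ 2) * X := by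
    rw [← sq]
    refine key.trans ?_
    calc _ ≤ (∫⁻ x in closedBall x0 (7 * r), ‖dz H x‖ₑ ^ 2) * (4 * ENNReal.ofReal c0 ^ 2 * X) := by
          gcongr
      _ = _ := by ring
  have k3 : X ≤ 4 * ENNReal.ofReal c0 ^ 2 * ∫⁻ x in closedBall x0 (7 * r), ‖dz H x‖ₑ ^ 2 := by
    by_cases h0 : X = 0
    · rw [h0]; exact zero_le
    · exact (ENNReal.mul_le_mul_iff_left h0 hXtop).1 k2
  refine le_trans ?_ k3
  rw [← lintegral_indicator measurableSet_closedBall]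
  apply lintegral_mono
  intro x
  simp only
  by_cases hx : x ∈ closedBall x0 (5 * r)
  · rw [indicator_of_mem hx, χ.one_of_mem_closedBall hx, one_mul,
      ENNReal.ofReal_pow (norm_nonneg _), ofReal_norm]
  · rw [indicator_of_notMem hx]; exact zero_le

def nu (a : E2 → ℝ) : Measure E2 := volume.withDensity (fun x => ENNReal.ofReal (a x))

lemma nu_split {a : E2 → ℝ} (ha : Continuous a) (c : ℝ) {B : Set E2} (hB : MeasurableSet B) :
    nu a B ≤ nu a (B ∩ {x | c < a x}) + ENNReal.ofReal c * volume B := by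
  have hm : MeasurableSet {x | c < a x} := measurableSet_lt measurable_const ha.measurable
  rw [← measure_inter_add_sdiff B hm]
  gcongr
  unfold nu
  rw [withDensity_apply _ (hB.diff hm)]
  calc ∫⁻ x in B \ {x | c < a x}, ENNReal.ofReal (a x)
      ≤ ∫⁻ x in B \ {x | c < a x}, ENNReal.ofReal c := by
        apply setLIntegral_mono measurable_const
        intro x hx
        apply ENNReal.ofReal_le_ofReal
        simpa using hx.2
    _ = ENNReal.ofReal c * volume (B \ {x | c < a x}) := by simp
    _ ≤ _ := by gcongr; exact sdiff_subset

lemma vol_ball (x : E2) {r : ℝ} (hr : 0 ≤ r) :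
    volume (closedBall x r) = ENNReal.ofReal (r ^ 2) * volume (ball (0 : E2) 1) := by
  rw [Measure.addHaar_closedBall _ _ hr]
  simp

lemma vol_unit_pos : 0 < (volume (ball (0 : E2) 1)).toReal :=
  ENNReal.toReal_pos (measure_ball_pos _ _ one_pos).ne' measure_ball_lt_top.ne

lemma good_radius {a b : E2 → ℝ} (ha : Continuous a) {γ : Measure E2} [IsFiniteMeasure γ]
    (hγ : nu a ≤ γ) {lam : ℝ} (hlam : 0 < lam) :
    ∃ R : ℝ, ∀ x, lam < a x → ∃ r : ℝ, 0 < r ∧ r ≤ R ∧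
      ENNReal.ofReal lam * volume (closedBall x r) ≤ γ (closedBall x r) ∧
      γ (closedBall x (7 * r)) ≤ ENNReal.ofReal lam * volume (closedBall x (7 * r)) := by
  set v := (volume (ball (0 : E2) 1)).toReal with hv
  have hv0 : 0 < v := vol_unit_pos
  have hvv : volume (ball (0 : E2) 1) = ENNReal.ofReal v :=
    (ENNReal.ofReal_toReal measure_ball_lt_top.ne).symm
  refine ⟨√((γ univ).toReal / (lam * v)), fun x hx => ?_⟩
  set S : Set ℝ := {r | 0 < r ∧
    ENNReal.ofReal lam * volume (closedBall x r) ≤ γ (closedBall x r)} with hS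
  have hbd : ∀ r ∈ S, r ≤ √((γ univ).toReal / (lam * v)) := by
    rintro r ⟨hr0, hr⟩
    apply Real.le_sqrt_of_sq_le
    rw [le_div_iff₀ (by positivity)]
    rw [vol_ball x hr0.le, hvv, ← ENNReal.ofReal_mul (by positivity),
      ← ENNReal.ofReal_mul hlam.le] at hr
    have h2 := hr.trans (measure_mono (subset_univ _))
    have h3 := (ENNReal.ofReal_le_iff_le_toReal (measure_ne_top γ univ)).1 h2
    linarith
  have hne : S.Nonempty := by
    have : {y | lam < a y} ∈ 𝓝 x := (isOpen_lt continuous_const ha).mem_nhds hx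
    obtain ⟨ε, hε, hsub⟩ := Metric.nhds_basis_closedBall.mem_iff.1 this
    refine ⟨ε, hε, le_trans ?_ (hγ _)⟩
    unfold nu
    rw [withDensity_apply _ measurableSet_closedBall, ← setLIntegral_const]
    apply setLIntegral_mono (ENNReal.measurable_ofReal.comp ha.measurable)
    intro y hy
    exact ENNReal.ofReal_le_ofReal (le_of_lt (hsub hy))
  have hbdd : BddAbove S := ⟨_, hbd⟩
  have hpos : 0 < sSup S := by
    obtain ⟨r, hr⟩ := hne
    exact hr.1.trans_le (le_csSup hbdd hr)
  obtain ⟨r, hrS, hr⟩ := exists_lt_of_lt_csSup hne (show sSup S / 7 < sSup S by linarith)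
  refine ⟨r, hrS.1, hbd r hrS, hrS.2, ?_⟩
  by_contra! hcon
  have : 7 * r ∈ S := ⟨by linarith [hrS.1], hcon.le⟩
  have := le_csSup hbdd this
  linarith

lemma cover {a b : E2 → ℝ} (ha : Continuous a) (hb : Continuous b)
    [IsFiniteMeasure (nu a)] [IsFiniteMeasure (nu b)] {A : ℝ≥0∞} {N : ℝ} (hN : 1 ≤ N)
    (hloc : ∀ (x0 : E2) (r lam : ℝ), 0 < r → 0 < lam →
      nu a (closedBall x0 (7 * r)) ≤ ENNReal.ofReal lam * volume (closedBall x0 (7 * r)) →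
      nu a (closedBall x0 (5 * r) ∩ {x | N * lam < a x}) ≤ A * nu b (closedBall x0 (7 * r)))
    {M lam : ℝ} (hM : 0 < M) (hlam : 0 < lam) :
    ENNReal.ofReal M * nu a {x | N * lam < a x} ≤
      98 * A * (nu a {x | lam / 4 < a x} + ENNReal.ofReal M * nu b {x | lam / (4 * M) < b x}) := by
  have hmA : ∀ c, MeasurableSet {x | c < a x} := fun c =>
    measurableSet_lt measurable_const ha.measurable
  have hmB : ∀ c, MeasurableSet {x | c < b x} := fun c =>
    measurableSet_lt measurable_const hb.measurable
  set γ : Measure E2 := nu a + (ENNReal.ofReal M) • nu b with hγ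
  have : IsFiniteMeasure ((ENNReal.ofReal M) • nu b) := Measure.smul_finite _ ENNReal.ofReal_ne_top
  have hγa : nu a ≤ γ := Measure.le_add_right le_rfl
  have hγb : ∀ s, ENNReal.ofReal M * nu b s ≤ γ s := by
    intro s
    simp [hγ]
  obtain ⟨R, hR⟩ := good_radius (b := b) ha hγa hlam
  set T := {x | N * lam < a x} with hT
  have hTl : ∀ x ∈ T, lam < a x := by
    intro x hx
    have : N * lam < a x := hx
    nlinarith
  choose! r hr0 hrR hr1 hr2 using fun x (hx : x ∈ T) => hR x (hTl x hx)
  obtain ⟨u, huT, hdisj, hcov⟩ := Vitali.exists_disjoint_subfamily_covering_enlargement_closedBall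
    T (fun x : E2 => x) r R hrR 5 (by norm_num)
  have hcount : u.Countable := by
    refine hdisj.countable_of_nonempty_interior fun i hi => ?_
    exact ⟨i, ball_subset_interior_closedBall (mem_ball_self (hr0 i (huT hi)))⟩
  set θ : Measure E2 := (nu a).restrict {x | lam / 4 < a x} +
    (ENNReal.ofReal M) • (nu b).restrict {x | lam / (4 * M) < b x} with hθ
  have hθu : θ univ = nu a {x | lam / 4 < a x} + ENNReal.ofReal M * nu b {x | lam / (4 * M) < b x} := by
    simp [hθ]
  have hball : ∀ x ∈ T, ENNReal.ofReal lam * volume (closedBall x (r x)) ≤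
      2 * θ (closedBall x (r x)) := by
    intro x hx
    set B := closedBall x (r x) with hB
    have hBm : MeasurableSet B := measurableSet_closedBall
    set X := ENNReal.ofReal (lam / 4) * volume B with hX
    have hXt : X ≠ ⊤ := ENNReal.mul_ne_top ENNReal.ofReal_ne_top
      (isCompact_closedBall x (r x)).measure_lt_top.ne
    have h4 : ENNReal.ofReal lam * volume B = 4 * X := by
      rw [hX, ← mul_assoc, show (4 : ℝ≥0∞) = ENNReal.ofReal 4 by simp,
        ← ENNReal.ofReal_mul (by norm_num)]
      congr 2; ring
    have h5 : γ B ≤ θ B + 2 * X := by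
      have s1 := nu_split ha (lam / 4) hBm
      have s2 := nu_split hb (lam / (4 * M)) hBm
      have e2 : ENNReal.ofReal M * (ENNReal.ofReal (lam / (4 * M)) * volume B) = X := by
        rw [hX, ← mul_assoc, ← ENNReal.ofReal_mul hM.le]
        congr 2; field_simp
      have eγ : γ B = nu a B + ENNReal.ofReal M * nu b B := by simp [hγ]
      have eθ : θ B = nu a (B ∩ {x | lam / 4 < a x}) +
          ENNReal.ofReal M * nu b (B ∩ {x | lam / (4 * M) < b x}) := by
        simp [hθ, Measure.restrict_apply hBm]
      rw [eγ, eθ]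
      calc _ ≤ (nu a (B ∩ {x | lam / 4 < a x}) + X) + ENNReal.ofReal M *
            (nu b (B ∩ {x | lam / (4 * M) < b x}) + ENNReal.ofReal (lam / (4 * M)) * volume B) := by
            gcongr
        _ = _ := by rw [mul_add, e2]; ring
    have h6 : 2 * X + 2 * X ≤ θ B + 2 * X := by
      calc 2 * X + 2 * X = 4 * X := by ring
        _ ≤ γ B := by rw [← h4]; exact hr1 x hx
        _ ≤ _ := h5
    have h7 : 2 * X ≤ θ B :=
      (ENNReal.add_le_add_iff_right (ENNReal.mul_ne_top (by norm_num) hXt)).1 h6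
    rw [h4]
    calc 4 * X = 2 * (2 * X) := by ring
      _ ≤ _ := by gcongr
  have hb7 : ∀ x ∈ T, ENNReal.ofReal M * nu a (closedBall x (5 * r x) ∩ T) ≤
      98 * A * θ (closedBall x (r x)) := by
    intro x hx
    have l1 := hloc x (r x) lam (hr0 x hx) hlam ((hγa _).trans (hr2 x hx))
    have v7 : volume (closedBall x (7 * r x)) = 49 * volume (closedBall x (r x)) := by
      rw [vol_ball x (hr0 x hx).le, vol_ball x (by linarith [hr0 x hx]), ← mul_assoc,
        show (49 : ℝ≥0∞) = ENNReal.ofReal 49 by simp, ← ENNReal.ofReal_mul (by norm_num)]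
      congr 2; ring
    calc _ ≤ ENNReal.ofReal M * (A * nu b (closedBall x (7 * r x))) := by gcongr
      _ = A * (ENNReal.ofReal M * nu b (closedBall x (7 * r x))) := by ring
      _ ≤ A * (ENNReal.ofReal lam * volume (closedBall x (7 * r x))) := mul_le_mul' le_rfl ((hγb _).trans (hr2 x hx))
      _ = A * 49 * (ENNReal.ofReal lam * volume (closedBall x (r x))) := by rw [v7]; ring
      _ ≤ A * 49 * (2 * θ (closedBall x (r x))) := mul_le_mul' le_rfl (hball x hx)
      _ = _ := by ring
  have hTcov : T ⊆ ⋃ x ∈ u, (closedBall x (5 * r x) ∩ T) := by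
    intro y hy
    obtain ⟨x, hxu, hsub⟩ := hcov y hy
    simp only [mem_iUnion]
    exact ⟨x, hxu, hsub (mem_closedBall_self (hr0 y hy).le), hy⟩
  have : Countable u := hcount.to_subtype
  calc ENNReal.ofReal M * nu a T
      ≤ ENNReal.ofReal M * ∑' x : u, nu a (closedBall (x : E2) (5 * r x) ∩ T) := by
        gcongr
        exact (measure_mono hTcov).trans (measure_biUnion_le _ hcount _)
    _ = ∑' x : u, ENNReal.ofReal M * nu a (closedBall (x : E2) (5 * r x) ∩ T) :=
        ENNReal.tsum_mul_left.symm
    _ ≤ ∑' x : u, 98 * A * θ (closedBall (x : E2) (r x)) :=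
        ENNReal.tsum_le_tsum fun x => hb7 x (huT x.2)
    _ = 98 * A * ∑' x : u, θ (closedBall (x : E2) (r x)) := ENNReal.tsum_mul_left
    _ = 98 * A * θ (⋃ x ∈ u, closedBall x (r x)) := by
        rw [measure_biUnion hcount hdisj (fun x _ => measurableSet_closedBall)]
    _ ≤ 98 * A * θ univ := by gcongr; exact subset_univ _
    _ = _ := by rw [hθu]

lemma nu_sq (g : E2 → ℂ) (B : Set E2) :
    nu (fun x => ‖g x‖ ^ 2) B = ∫⁻ x in B, ‖g x‖ₑ ^ 2 := by
  rw [nu, withDensity_apply' _ B]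
  congr 1
  ext x
  rw [ENNReal.ofReal_pow (norm_nonneg _), ofReal_norm]

lemma nu_finite (g : CS) : IsFiniteMeasure (nu (fun x => ‖g x‖ ^ 2)) := by
  constructor
  rw [nu_sq, Measure.restrict_univ]
  have h := (g.memLp 2 (volume : Measure E2)).2
  have h2 := lintegral_rpow_enorm_lt_top_of_eLpNorm_lt_top (p := 2) (by norm_num) (by norm_num) h
  simpa using h2

def CN : ℝ := 1 + 4 * 49 * hh_bdd.choose * (volume (ball (0 : E2) 1)).toReal / c0

lemma CN_ge : 1 ≤ CN := by
  have h1 := hh_bdd.choose_spec.1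
  have h2 := vol_unit_pos
  have h3 := c0_pos
  have : 0 ≤ 4 * 49 * hh_bdd.choose * (volume (ball (0 : E2) 1)).toReal / c0 := by positivity
  unfold CN; linarith

lemma hloc_main (H : CS) (x0 : E2) (r lam : ℝ) (hr : 0 < r) (hlam : 0 < lam)
    (hs : nu (fun x => ‖dzbS H x‖ ^ 2) (closedBall x0 (7 * r)) ≤
      ENNReal.ofReal lam * volume (closedBall x0 (7 * r))) :
    nu (fun x => ‖dzbS H x‖ ^ 2) (closedBall x0 (5 * r) ∩ {x | CN * lam < ‖dzbS H x‖ ^ 2}) ≤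
      16 * nu (fun x => ‖dzS H x‖ ^ 2) (closedBall x0 (7 * r)) := by
  set C := hh_bdd.choose with hCdef
  have hC0 : 0 < C := hh_bdd.choose_spec.1
  have hC := hh_bdd.choose_spec.2
  set v := (volume (ball (0 : E2) 1)).toReal with hv
  have hv0 : 0 < v := vol_unit_pos
  have hc := c0_pos
  have hvv : volume (ball (0 : E2) 1) = ENNReal.ofReal v := by
    rw [hv, ENNReal.ofReal_toReal measure_ball_lt_top.ne]
  set T := closedBall x0 (5 * r) ∩ {x | CN * lam < ‖dzbS H x‖ ^ 2} with hT
  have hTm : MeasurableSet T := measurableSet_closedBall.inter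
    (measurableSet_lt measurable_const ((dzbS H).continuous.norm.pow 2).measurable)
  have key : ∀ x ∈ T, ‖dzbS H x‖ₑ ^ 2 ≤
      ENNReal.ofReal (4 / c0 ^ 2) * ‖c0 * dzbS H x - Mop r (dzbS H) x‖ₑ ^ 2 := by
    intro x hx
    have hm : ‖Mop r (dzbS H) x‖ ^ 2 ≤ c0 * C * 49 * v * lam := by
      have h1 := Mop_pt_ball hC hr (dzbS H) x
      rw [← nu_sq] at h1
      have h2 : nu (fun x => ‖dzbS H x‖ ^ 2) (closedBall x r) ≤
          nu (fun x => ‖dzbS H x‖ ^ 2) (closedBall x0 (7 * r)) := by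
        apply measure_mono
        apply closedBall_subset_closedBall'
        have := mem_closedBall.1 hx.1
        linarith
      have h3 := h1.trans (mul_le_mul' le_rfl (h2.trans hs))
      rw [vol_ball _ (by positivity), hvv, ← ENNReal.ofReal_mul (by positivity),
        ← ENNReal.ofReal_mul (by positivity), ← ENNReal.ofReal_mul (by positivity),
        ← ofReal_norm, ← ENNReal.ofReal_pow (norm_nonneg _),
        ENNReal.ofReal_le_ofReal_iff (by positivity)] at h3
      refine h3.trans (le_of_eq ?_)
      field_simp
      ring
    have hN : CN * lam < ‖dzbS H x‖ ^ 2 := hx.2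
    have hN2 : 4 * (c0 * C * 49 * v * lam) ≤ c0 ^ 2 * (CN * lam) := by
      have : CN = 1 + 4 * 49 * C * v / c0 := rfl
      rw [this]
      have e : c0 ^ 2 * ((1 + 4 * 49 * C * v / c0) * lam) = c0 ^ 2 * lam + 4 * (c0 * C * 49 * v * lam) := by
        field_simp
        try ring
      rw [e]
      have : 0 ≤ c0 ^ 2 * lam := by positivity
      linarith
    have hM : ‖Mop r (dzbS H) x‖ ≤ c0 * ‖dzbS H x‖ / 2 := by
      refine (sq_le_sq₀ (norm_nonneg _) (by positivity)).1 ?_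
      have : c0 ^ 2 * (CN * lam) ≤ c0 ^ 2 * ‖dzbS H x‖ ^ 2 := by gcongr
      calc _ ≤ _ := hm
        _ ≤ c0 ^ 2 * ‖dzbS H x‖ ^ 2 / 4 := by linarith
        _ = _ := by ring
    have hd : c0 * ‖dzbS H x‖ / 2 ≤ ‖c0 * dzbS H x - Mop r (dzbS H) x‖ := by
      have h := norm_sub_norm_le ((c0 : ℂ) * dzbS H x) (Mop r (dzbS H) x)
      rw [norm_mul, Complex.norm_real, Real.norm_of_nonneg hc.le] at h
      linarith
    have hfin : ‖dzbS H x‖ ^ 2 ≤ 4 / c0 ^ 2 * ‖c0 * dzbS H x - Mop r (dzbS H) x‖ ^ 2 := by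
      calc ‖dzbS H x‖ ^ 2 = 4 / c0 ^ 2 * (c0 * ‖dzbS H x‖ / 2) ^ 2 := by field_simp; try ring
        _ ≤ _ := by gcongr
    rw [← ofReal_norm, ← ofReal_norm, ← ENNReal.ofReal_pow (norm_nonneg _),
      ← ENNReal.ofReal_pow (norm_nonneg _), ← ENNReal.ofReal_mul (by positivity)]
    exact ENNReal.ofReal_le_ofReal hfin
  rw [nu_sq, nu_sq]
  calc ∫⁻ x in T, ‖dzbS H x‖ₑ ^ 2
      ≤ ∫⁻ x in T, ENNReal.ofReal (4 / c0 ^ 2) * ‖c0 * dzbS H x - Mop r (dzbS H) x‖ₑ ^ 2 :=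
        setLIntegral_mono' hTm key
    _ = ENNReal.ofReal (4 / c0 ^ 2) * ∫⁻ x in T, ‖c0 * dzbS H x - Mop r (dzbS H) x‖ₑ ^ 2 :=
        lintegral_const_mul' _ _ ENNReal.ofReal_ne_top
    _ ≤ ENNReal.ofReal (4 / c0 ^ 2) *
        ∫⁻ x in closedBall x0 (5 * r), ‖c0 * dzbS H x - Mop r (dzbS H) x‖ₑ ^ 2 :=
        mul_le_mul' le_rfl (lintegral_mono_set inter_subset_left)
    _ ≤ ENNReal.ofReal (4 / c0 ^ 2) * (4 * ENNReal.ofReal c0 ^ 2 *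
        ∫⁻ x in closedBall x0 (7 * r), ‖dz H x‖ₑ ^ 2) := mul_le_mul' le_rfl (local_est H x0 hr)
    _ = 16 * ∫⁻ x in closedBall x0 (7 * r), ‖dzS H x‖ₑ ^ 2 := by
        simp_rw [dzS_apply]
        rw [← mul_assoc]
        congr 1
        rw [show (4 : ℝ≥0∞) = ENNReal.ofReal 4 by simp, ← ENNReal.ofReal_pow hc.le,
          ← ENNReal.ofReal_mul (by positivity), ← ENNReal.ofReal_mul (by positivity),
          show (16 : ℝ≥0∞) = ENNReal.ofReal 16 by simp]
        congr 1
        field_simp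
        norm_num

/-- Layer cake for the measure `nu a` and the function `c * a`. -/
lemma layer {a : E2 → ℝ} (ha : Continuous a) (h0 : ∀ x, 0 ≤ a x) {c s : ℝ} (hc : 0 < c) (hs : 0 < s) :
    ENNReal.ofReal (c ^ s) * ∫⁻ x, ENNReal.ofReal (a x ^ (s + 1)) =
      ENNReal.ofReal s * ∫⁻ t in Ioi (0 : ℝ), nu a {x | t < c * a x} * ENNReal.ofReal (t ^ (s - 1)) := by
  rw [← lintegral_rpow_eq_lintegral_meas_lt_mul (nu a) (f := fun x => c * a x)
    (Filter.Eventually.of_forall fun x => mul_nonneg hc.le (h0 x))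
    (continuous_const.mul ha).measurable.aemeasurable hs]
  rw [nu, lintegral_withDensity_eq_lintegral_mul _ ha.measurable.ennreal_ofReal
    (g := fun x => ENNReal.ofReal ((c * a x) ^ s))
    (((continuous_const.mul ha).measurable.pow_const s).ennreal_ofReal),
    ← lintegral_const_mul' _ _ ENNReal.ofReal_ne_top]
  congr 1
  ext x
  have := h0 x
  simp only [Pi.mul_apply]
  rw [← ENNReal.ofReal_mul (by positivity), ← ENNReal.ofReal_mul (by positivity),
    Real.mul_rpow hc.le (h0 x), Real.rpow_add_one' (h0 x) (by positivity)]
  congr 1; ring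

lemma lp_cover {a b : E2 → ℝ} (ha : Continuous a) (hb : Continuous b)
    (ha0 : ∀ x, 0 ≤ a x) (hb0 : ∀ x, 0 ≤ b x) {N M s : ℝ} (hN : 0 < N) (hM : 0 < M) (hs : 0 < s)
    (h : ∀ lam, 0 < lam → ENNReal.ofReal M * nu a {x | N * lam < a x} ≤
      98 * 16 * (nu a {x | lam / 4 < a x} + ENNReal.ofReal M * nu b {x | lam / (4 * M) < b x})) :
    ENNReal.ofReal M * (ENNReal.ofReal ((1 / N) ^ s) * ∫⁻ x, ENNReal.ofReal (a x ^ (s + 1))) ≤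
      98 * 16 * (ENNReal.ofReal (4 ^ s) * (∫⁻ x, ENNReal.ofReal (a x ^ (s + 1))) +
        ENNReal.ofReal M * (ENNReal.ofReal ((4 * M) ^ s) * ∫⁻ x, ENNReal.ofReal (b x ^ (s + 1)))) := by
  rw [layer ha ha0 (by positivity) hs, layer ha ha0 (by positivity) hs, layer hb hb0 (by positivity) hs]
  have hmono : ∀ (g : E2 → ℝ) (c : ℝ), Measurable fun t : ℝ => nu g {x | t < c * g x} := by
    intro g c
    apply Antitone.measurable
    intro t t' htt
    exact measure_mono fun x hx => lt_of_le_of_lt htt hx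
  have hpow : Measurable fun t : ℝ => ENNReal.ofReal (t ^ (s - 1)) :=
    (measurable_id.pow_const (s - 1)).ennreal_ofReal
  have e : ∀ X Y Z : ℝ≥0∞, 98 * 16 * (ENNReal.ofReal s * X + Z * (ENNReal.ofReal s * Y)) =
      ENNReal.ofReal s * (98 * 16 * (X + Z * Y)) := by intro X Y Z; ring
  rw [e, mul_left_comm]
  refine mul_le_mul' le_rfl ?_
  rw [← lintegral_const_mul' _ _ ENNReal.ofReal_ne_top, ← lintegral_const_mul' _ _ ENNReal.ofReal_ne_top,
    ← lintegral_add_left (f := fun t : ℝ => nu a {x | t < 4 * a x} * ENNReal.ofReal (t ^ (s - 1)))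
      ((hmono a 4).mul hpow), ← lintegral_const_mul' _ _ (by finiteness)]
  refine setLIntegral_mono' measurableSet_Ioi fun t ht => ?_
  have e1 : {x | t < 1 / N * a x} = {x | N * t < a x} := by
    ext x; simp only [mem_ofPred_eq]; rw [one_div_mul_eq_div, lt_div_iff₀ hN, mul_comm]
  have e2 : {x | t < 4 * a x} = {x | t / 4 < a x} := by
    ext x; simp only [mem_ofPred_eq]; rw [div_lt_iff₀ (by norm_num), mul_comm]
  have e3 : {x | t < 4 * M * b x} = {x | t / (4 * M) < b x} := by
    ext x; simp only [mem_ofPred_eq]; rw [div_lt_iff₀ (by positivity), mul_comm]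
  rw [e1, e2, e3]
  calc _ = (ENNReal.ofReal M * nu a {x | N * t < a x}) * ENNReal.ofReal (t ^ (s - 1)) := by ring
    _ ≤ _ := mul_le_mul' (h t ht) le_rfl
    _ = _ := by ring

lemma integrable_pow_S {F : Type*} [NormedAddCommGroup F] [NormedSpace ℝ F] (g : 𝓢(E2, F)) {p : ℝ}
    (hp : 2 ≤ p) : Integrable (fun x => ‖g x‖ ^ p) := by
  have h := (g.memLp (ENNReal.ofReal p) (volume : Measure E2)).integrable_norm_rpow
    (by simp; linarith) (by simp)
  rwa [ENNReal.toReal_ofReal (by linarith)] at h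

/-- The `L^p` bound for the Beurling transform. -/
lemma beurling {p : ℝ} (hp : 2 ≤ p) : ∃ C : ℝ, 0 < C ∧ ∀ H : CS,
    ∫ x, ‖dzbS H x‖ ^ p ≤ C * ∫ x, ‖dzS H x‖ ^ p := by
  rcases hp.eq_or_lt with rfl | hp2
  · refine ⟨1, one_pos, fun H => ?_⟩
    have := energy H
    simp_rw [dzbS_apply, dzS_apply]
    rw [one_mul]
    exact_mod_cast this.le
  set s := p / 2 - 1 with hsdef
  have hs : 0 < s := by rw [hsdef]; linarith
  have hN0 : 0 < CN := lt_of_lt_of_le one_pos CN_ge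
  set M : ℝ := 2 * (98 * 16) * 4 ^ s * CN ^ s with hM
  have hM0 : 0 < M := by positivity
  refine ⟨M * (4 * M) ^ s / 4 ^ s, by positivity, fun H => ?_⟩
  have fa := nu_finite (dzbS H)
  have fb := nu_finite (dzS H)
  have hca : Continuous fun x => ‖dzbS H x‖ ^ 2 := (dzbS H).continuous.norm.pow 2
  have hcb : Continuous fun x => ‖dzS H x‖ ^ 2 := (dzS H).continuous.norm.pow 2
  have main := lp_cover hca hcb (fun x => by positivity) (fun x => by positivity) hN0 hM0 hs
    (fun lam hlam => cover hca hcb CN_ge (hloc_main H) hM0 hlam)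
  have conv : ∀ g : CS, ∫⁻ x, ENNReal.ofReal ((‖g x‖ ^ 2) ^ (s + 1)) =
      ENNReal.ofReal (∫ x, ‖g x‖ ^ p) := by
    intro g
    rw [ofReal_integral_eq_lintegral_ofReal (integrable_pow_S g hp)
      (Filter.Eventually.of_forall fun x => by positivity)]
    congr 1; ext x
    rw [← Real.rpow_natCast, ← Real.rpow_mul (norm_nonneg _)]
    congr 2; rw [hsdef]; push_cast; ring
  rw [conv, conv] at main
  set X := ∫ x, ‖dzbS H x‖ ^ p with hX
  set Y := ∫ x, ‖dzS H x‖ ^ p with hY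
  have hX0 : 0 ≤ X := integral_nonneg fun x => by positivity
  have hY0 : 0 ≤ Y := integral_nonneg fun x => by positivity
  rw [show (98 * 16 : ℝ≥0∞) = ENNReal.ofReal (98 * 16) by
      rw [ENNReal.ofReal_mul (by norm_num)]; simp,
    ← ENNReal.ofReal_mul (by positivity), ← ENNReal.ofReal_mul (by positivity),
    ← ENNReal.ofReal_mul (by positivity), ← ENNReal.ofReal_mul (by positivity),
    ← ENNReal.ofReal_mul (by positivity), ← ENNReal.ofReal_add (by positivity) (by positivity),
    ← ENNReal.ofReal_mul (by positivity), ENNReal.ofReal_le_ofReal_iff (by positivity)] at main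
  have e1 : M * ((1 / CN) ^ s * X) = 2 * (98 * 16) * 4 ^ s * X := by
    rw [Real.div_rpow zero_le_one hN0.le, Real.one_rpow, hM]
    have : CN ^ s ≠ 0 := (by positivity : 0 < CN ^ s).ne'
    field_simp
  rw [e1] at main
  have h4 : (0 : ℝ) < 4 ^ s := by positivity
  rw [div_mul_eq_mul_div, le_div_iff₀ h4]
  nlinarith [main]

abbrev RS := 𝓢(E2, ℝ)

lemma lineDeriv_comm_real (H : RS) (v w : E2) : (∂_{v} (∂_{w} H) : RS) = ∂_{w} (∂_{v} H) := by
  ext x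
  have h : ∀ v w : E2, (∂_{v} (∂_{w} H) : RS) x = fderiv ℝ (fderiv ℝ H) x v w := by
    intro v w
    rw [SchwartzMap.lineDerivOp_apply_eq_fderiv]
    have : (⇑(∂_{w} H : RS)) = fun y => fderiv ℝ H y w := by
      ext y; rw [SchwartzMap.lineDerivOp_apply_eq_fderiv]
    rw [this]
    have hd : DifferentiableAt ℝ (fderiv ℝ H) x :=
      ((H.smooth 2).fderiv_right (m := 1) (by norm_num)).differentiable (by norm_num) x
    rw [fderiv_clm_apply hd (differentiableAt_const _)]
    simp
  rw [h, h]
  have := (H.smooth 2).contDiffAt (x := x)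
  exact (this.isSymmSndFDerivAt (by simp)).eq v w

/-- Component of a Schwartz vector field. -/
def comp (u : 𝓢(E2, E2)) (i : Fin 2) : RS := u.postcompCLM (EuclideanSpace.proj i : E2 →L[ℝ] ℝ)

lemma comp_deriv (u : 𝓢(E2, E2)) (i : Fin 2) (x v : E2) :
    (∂_{v} (comp u i) : RS) x = fderiv ℝ u x v i := by
  rw [SchwartzMap.lineDerivOp_apply_eq_fderiv]
  have h : (⇑(comp u i)) = (EuclideanSpace.proj i : E2 →L[ℝ] ℝ) ∘ u := rfl
  rw [h, ((EuclideanSpace.proj i : E2 →L[ℝ] ℝ).hasFDerivAt.comp x u.differentiableAt.hasFDerivAt).fderiv]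
  rfl

def divS (u : 𝓢(E2, E2)) : RS := ∂_{e2 0} (comp u 0) + ∂_{e2 1} (comp u 1)
def curlS (u : 𝓢(E2, E2)) : RS := ∂_{e2 1} (comp u 0) - ∂_{e2 0} (comp u 1)

lemma divS_coe (u : 𝓢(E2, E2)) : ⇑(divS u) = div2 u := by
  ext x
  simp [divS, div2, comp_deriv, Fin.sum_univ_two]

lemma curlS_coe (u : 𝓢(E2, E2)) : ⇑(curlS u) = curl2 u := by
  ext x
  simp [curlS, curl2, comp_deriv]

def toC (g : RS) : CS := g.postcompCLM Complex.ofRealCLM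

lemma toC_deriv (g : RS) (x v : E2) : fderiv ℝ (toC g) x v = ((fderiv ℝ g x v : ℝ) : ℂ) := by
  have h : (⇑(toC g)) = Complex.ofRealCLM ∘ g := rfl
  rw [h, (Complex.ofRealCLM.hasFDerivAt.comp x g.differentiableAt.hasFDerivAt).fderiv]
  rfl

def HS (G W : RS) (μ : ℝ) : CS := toC G + (Complex.I * μ) • toC W

lemma HS_deriv (G W : RS) (μ : ℝ) (x v : E2) :
    fderiv ℝ (HS G W μ) x v = ((fderiv ℝ G x v : ℝ) : ℂ) + Complex.I * μ * ((fderiv ℝ W x v : ℝ) : ℂ) := by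
  have h : (⇑(HS G W μ)) = (⇑(toC G)) + (Complex.I * μ) • (⇑(toC W)) := rfl
  rw [h, fderiv_add (toC G).differentiableAt ((toC W).differentiableAt.const_smul _),
    fderiv_const_smul (toC W).differentiableAt]
  simp [toC_deriv]

lemma lap_coe (u : 𝓢(E2, E2)) (x : E2) (i : Fin 2) :
    lapVec u x i = (∂_{e2 0} (∂_{e2 0} (comp u i)) : RS) x + (∂_{e2 1} (∂_{e2 1} (comp u i)) : RS) x := by
  have h : ∀ v, (⇑(∂_{v} (comp u i) : RS)) = fun y => fderiv ℝ u y v i := by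
    intro v; ext y; exact comp_deriv u i y v
  rw [SchwartzMap.lineDerivOp_apply_eq_fderiv (f := (∂_{e2 0} (comp u i) : RS)),
    SchwartzMap.lineDerivOp_apply_eq_fderiv (f := (∂_{e2 1} (comp u i) : RS)), h, h]
  simp [lapVec, Fin.sum_univ_two]

lemma dzS_HS (μ lam : ℝ) (u : 𝓢(E2, E2)) (P : RS) (x : E2) :
    dzS (HS ((2 * μ + lam) • divS u - P) (curlS u) μ) x =
      ((NSflux μ lam u P x 0 : ℝ) : ℂ) - Complex.I * ((NSflux μ lam u P x 1 : ℝ) : ℂ) := by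
  have hN : ∀ i, NSflux μ lam u P x i = μ * lapVec u x i + (μ + lam) * fderiv ℝ (div2 u) x (e2 i)
      - fderiv ℝ P x (e2 i) := fun i => rfl
  have hG : ∀ v, fderiv ℝ ((2 * μ + lam) • divS u - P : RS) x v =
      (2 * μ + lam) * (∂_{v} (divS u) : RS) x - (∂_{v} P : RS) x := by
    intro v
    rw [← SchwartzMap.lineDerivOp_apply_eq_fderiv]
    simp [sub_eq_add_neg, LineDeriv.lineDerivOp_add, LineDeriv.lineDerivOp_neg, LineDeriv.lineDerivOp_smul]
  have hW : ∀ v, fderiv ℝ (curlS u) x v = (∂_{v} (curlS u) : RS) x := by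
    intro v
    rw [← SchwartzMap.lineDerivOp_apply_eq_fderiv]
  rw [dzS_apply, dz, HS_deriv, HS_deriv, hN, hN, lap_coe, lap_coe, ← divS_coe]
  simp only [hG, hW, ← SchwartzMap.lineDerivOp_apply_eq_fderiv]
  have a1 : ∀ v : E2, (∂_{v} (divS u) : RS) x = (∂_{v} (∂_{e2 0} (comp u 0)) : RS) x +
      (∂_{v} (∂_{e2 1} (comp u 1)) : RS) x := by
    intro v; simp [divS, LineDeriv.lineDerivOp_add]
  have a2 : ∀ v : E2, (∂_{v} (curlS u) : RS) x = (∂_{v} (∂_{e2 1} (comp u 0)) : RS) x -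
      (∂_{v} (∂_{e2 0} (comp u 1)) : RS) x := by
    intro v; simp [curlS, sub_eq_add_neg, LineDeriv.lineDerivOp_add, LineDeriv.lineDerivOp_neg]
  simp only [a1, a2]
  rw [lineDeriv_comm_real (comp u 1) (e2 1) (e2 0), lineDeriv_comm_real (comp u 0) (e2 1) (e2 0)]
  push_cast
  have hI : Complex.I * Complex.I = -1 := Complex.I_mul_I
  linear_combination (-(μ : ℂ) * ((∂_{e2 1} (∂_{e2 1} (comp u 0)) : RS) x - (∂_{e2 0} (∂_{e2 1} (comp u 1)) : RS) x)) * hI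

lemma norm_dzS_HS (μ lam : ℝ) (u : 𝓢(E2, E2)) (P : RS) (x : E2) :
    ‖dzS (HS ((2 * μ + lam) • divS u - P) (curlS u) μ) x‖ = ‖NSflux μ lam u P x‖ := by
  rw [dzS_HS, EuclideanSpace.norm_eq, Complex.norm_def, Complex.normSq_apply]
  simp [Fin.sum_univ_two]
  congr 1
  ring

lemma norm_clm_le (L : E2 →L[ℝ] ℝ) : ‖L‖ ≤ |L (e2 0)| + |L (e2 1)| := by
  refine L.opNorm_le_bound (by positivity) fun y => ?_
  have hy : y = y 0 • e2 0 + y 1 • e2 1 := by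
    ext i; fin_cases i <;> simp [e2]
  have h0 : |y 0| ≤ ‖y‖ := by simpa using PiLp.norm_apply_le y 0
  have h1 : |y 1| ≤ ‖y‖ := by simpa using PiLp.norm_apply_le y 1
  have e : L y = y 0 * L (e2 0) + y 1 * L (e2 1) := by
    conv_lhs => rw [hy]
    simp
  rw [e, Real.norm_eq_abs]
  calc |y 0 * L (e2 0) + y 1 * L (e2 1)| ≤ |y 0| * |L (e2 0)| + |y 1| * |L (e2 1)| := by
        rw [← abs_mul, ← abs_mul]; exact abs_add_le _ _
    _ ≤ ‖y‖ * |L (e2 0)| + ‖y‖ * |L (e2 1)| := by gcongr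
    _ = _ := by ring

lemma deriv_bounds (H : CS) (x : E2) :
    ‖fderiv ℝ H x (e2 0)‖ ≤ (‖dzS H x‖ + ‖dzbS H x‖) / 2 ∧
    ‖fderiv ℝ H x (e2 1)‖ ≤ (‖dzS H x‖ + ‖dzbS H x‖) / 2 := by
  rw [dzS_apply, dzbS_apply]
  have h0 : 2 * fderiv ℝ H x (e2 0) = dz H x + dzb H x := by unfold dz dzb; ring
  have h1 : 2 * Complex.I * fderiv ℝ H x (e2 1) = dzb H x - dz H x := by unfold dz dzb; ring
  have n0 := congrArg norm h0
  have n1 := congrArg norm h1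
  simp only [norm_mul, Complex.norm_I, Complex.norm_ofNat, mul_one] at n0 n1
  have := norm_add_le (dz H x) (dzb H x)
  have := norm_sub_le (dzb H x) (dz H x)
  constructor <;> linarith

lemma grad_bounds (G W : RS) {μ : ℝ} (hμ : 0 < μ) (x : E2) :
    ‖fderiv ℝ G x‖ ≤ 1 * (‖dzS (HS G W μ) x‖ + ‖dzbS (HS G W μ) x‖) ∧
    ‖fderiv ℝ W x‖ ≤ μ⁻¹ * (‖dzS (HS G W μ) x‖ + ‖dzbS (HS G W μ) x‖) := by
  obtain ⟨b0, b1⟩ := deriv_bounds (HS G W μ) x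
  have re : ∀ v, |fderiv ℝ G x v| ≤ ‖fderiv ℝ (HS G W μ) x v‖ := by
    intro v
    have := Complex.abs_re_le_norm (fderiv ℝ (HS G W μ) x v)
    rw [HS_deriv] at this ⊢
    simpa using this
  have im : ∀ v, μ * |fderiv ℝ W x v| ≤ ‖fderiv ℝ (HS G W μ) x v‖ := by
    intro v
    have := Complex.abs_im_le_norm (fderiv ℝ (HS G W μ) x v)
    rw [HS_deriv] at this ⊢
    simpa [abs_mul, abs_of_pos hμ] using this
  constructor
  · have := norm_clm_le (fderiv ℝ G x)
    linarith [re (e2 0), re (e2 1)]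
  · have := norm_clm_le (fderiv ℝ W x)
    rw [inv_mul_eq_div, le_div_iff₀ hμ]
    nlinarith [im (e2 0), im (e2 1)]

lemma add_rpow_le_two {x y p : ℝ} (hx : 0 ≤ x) (hy : 0 ≤ y) (hp : 0 ≤ p) :
    (x + y) ^ p ≤ 2 ^ p * (x ^ p + y ^ p) := by
  have hxp := Real.rpow_nonneg hx p
  have hyp := Real.rpow_nonneg hy p
  have h2 : (0 : ℝ) ≤ 2 ^ p := by positivity
  rcases le_total x y with h | h
  · calc (x + y) ^ p ≤ (2 * y) ^ p := Real.rpow_le_rpow (by linarith) (by linarith) hp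
      _ = 2 ^ p * y ^ p := Real.mul_rpow (by norm_num) hy
      _ ≤ _ := by gcongr; linarith
  · calc (x + y) ^ p ≤ (2 * x) ^ p := Real.rpow_le_rpow (by linarith) (by linarith) hp
      _ = 2 ^ p * x ^ p := Real.mul_rpow (by norm_num) hx
      _ ≤ _ := by gcongr; linarith

lemma lp_of_pt {p C c : ℝ} (hp : 2 ≤ p) (hC : 0 < C) (hc : 0 < c) {f k : CS}
    (hfk : ∫ x, ‖k x‖ ^ p ≤ C * ∫ x, ‖f x‖ ^ p) (A : E2 → (E2 →L[ℝ] ℝ))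
    (hA : ∀ x, ‖A x‖ ≤ c * (‖f x‖ + ‖k x‖)) :
    (∫ x, ‖A x‖ ^ p) ^ (1 / p) ≤ (c ^ p * (2 ^ p * (1 + C))) ^ (1 / p) * (∫ x, ‖f x‖ ^ p) ^ (1 / p) := by
  have hp0 : 0 ≤ p := by linarith
  have hY0 : 0 ≤ ∫ x, ‖f x‖ ^ p := integral_nonneg fun x => by positivity
  rw [← Real.mul_rpow (by positivity) hY0]
  refine Real.rpow_le_rpow (integral_nonneg fun x => by positivity) ?_ (by positivity)
  calc ∫ x, ‖A x‖ ^ p ≤ ∫ x, c ^ p * (2 ^ p * (‖f x‖ ^ p + ‖k x‖ ^ p)) := by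
        refine integral_mono_of_nonneg (Filter.Eventually.of_forall fun x => by positivity)
          ((((integrable_pow_S f hp).add (integrable_pow_S k hp)).const_mul _).const_mul _)
          (Filter.Eventually.of_forall fun x => ?_)
        calc ‖A x‖ ^ p ≤ (c * (‖f x‖ + ‖k x‖)) ^ p :=
              Real.rpow_le_rpow (norm_nonneg _) (hA x) hp0
          _ = c ^ p * (‖f x‖ + ‖k x‖) ^ p := Real.mul_rpow hc.le (by positivity)
          _ ≤ _ := mul_le_mul_of_nonneg_left
              (add_rpow_le_two (norm_nonneg _) (norm_nonneg _) hp0) (by positivity)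
    _ = c ^ p * (2 ^ p * ((∫ x, ‖f x‖ ^ p) + ∫ x, ‖k x‖ ^ p)) := by
        rw [integral_const_mul, integral_const_mul,
          integral_add (integrable_pow_S f hp) (integrable_pow_S k hp)]
    _ ≤ c ^ p * (2 ^ p * ((∫ x, ‖f x‖ ^ p) + C * ∫ x, ‖f x‖ ^ p)) := by gcongr
    _ = _ := by ring

/-- Estimate (h19) of Lemma 2.6: ‖∇G‖_{L^p} + ‖∇curl u‖_{L^p} ≤ C ‖F‖_{L^p}, where
G = (2μ+λ) div u − P is the effective viscous flux and F = μΔu + (μ+λ)∇(div u) − ∇P. -/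
theorem effective_flux_gradient_estimate (μ lam : ℝ) (hμ : 0 < μ) (hlam : 0 ≤ μ + lam)
    (p : ℝ) (hp : 2 ≤ p) :
    ∃ C : ℝ, 0 < C ∧ ∀ (u : SchwartzMap E2 E2) (P : SchwartzMap E2 ℝ),
      (∫ x : E2, ‖fderiv ℝ (fun y => (2 * μ + lam) * div2 (⇑u) y - P y) x‖ ^ p) ^ (1 / p) +
      (∫ x : E2, ‖fderiv ℝ (curl2 (⇑u)) x‖ ^ p) ^ (1 / p) ≤
        C * (∫ x : E2, ‖NSflux μ lam (⇑u) (⇑P) x‖ ^ p) ^ (1 / p) := by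
  obtain ⟨C, hC, hB⟩ := beurling hp
  refine ⟨((1 : ℝ) ^ p * (2 ^ p * (1 + C))) ^ (1 / p) + (μ⁻¹ ^ p * (2 ^ p * (1 + C))) ^ (1 / p),
    by positivity, fun u P => ?_⟩
  have hG : (fun y => (2 * μ + lam) * div2 (⇑u) y - P y) = ⇑((2 * μ + lam) • divS u - P : RS) := by
    ext y
    simp [divS_coe]
  have hF : ∀ x, ‖NSflux μ lam (⇑u) (⇑P) x‖ =
      ‖dzS (HS ((2 * μ + lam) • divS u - P) (curlS u) μ) x‖ := fun x =>
    (norm_dzS_HS μ lam u P x).symm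
  rw [hG, ← curlS_coe]
  simp_rw [hF]
  rw [add_mul]
  refine add_le_add ?_ ?_
  · exact lp_of_pt hp hC one_pos (hB _) _
      fun x => (grad_bounds ((2 * μ + lam) • divS u - P) (curlS u) hμ x).1
  · exact lp_of_pt hp hC (inv_pos.2 hμ) (hB _) _
      fun x => (grad_bounds ((2 * μ + lam) • divS u - P) (curlS u) hμ x).2
end
end

section
/- Let C₀ > 0 and let 0 < β < α̃ ≤ 1. Let K : ℝ²∖{0} → ℝ be continuously differentiable with |K(x)| ≤ C₀|x|^{-1} and |∇K(x)| ≤ C₀|x|^{-2} for all x ≠ 0. Let f ∈ L¹(ℝ²;ℝ²) ∩ L²(ℝ²;ℝ²) satisfy ∫_{ℝ²} f(y) dy = 0. Then there exists a constant C = C(C₀, α̃, β) > 0 such that ‖ |x|^{β} (K∗f) ‖_{L²(ℝ²∖B₁)} ≤ C ( ‖ |y|^{α̃} f ‖_{L^{4/(4−α̃+β)}(ℝ²)} + ‖ |y|^{α̃} f ‖_{L¹(ℝ²)} ), where (K∗f)(x) = ∫_{ℝ²} K(x−y) f(y) dy. -/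
open MeasureTheory Real Set Metric

noncomputable section

/-- Young's convolution inequality with target `L²`. -/
lemma young_two (k g : E2 → ENNReal) (hk : Measurable k) (hg : Measurable g) (r p : ℝ)
    (hr : 0 < r) (hr2 : r ≤ 2) (hp : 0 < p) (hp2 : p ≤ 2) (hrp : 1 / r + 1 / p = 3 / 2) :
    eLpNorm (fun x => ∫⁻ y, k (x - y) * g y) 2 volume ≤
      (∫⁻ x, k x ^ r) ^ (1 / r) * (∫⁻ y, g y ^ p) ^ (1 / p) := by
  set a := ∫⁻ x, k x ^ r with ha
  set b := ∫⁻ y, g y ^ p with hb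
  have e1 : (2 - r) / r + (2 - p) / p = 1 := by
    have : (2 - r) / r + (2 - p) / p = 2 * (1 / r + 1 / p) - 2 := by field_simp; ring
    rw [this, hrp]; norm_num
  have n1 : 0 ≤ (2 - r) / r := div_nonneg (by linarith) hr.le
  have n2 : 0 ≤ (2 - p) / p := div_nonneg (by linarith) hp.le
  have hkx : ∀ x, Measurable fun y => k (x - y) := fun x => by fun_prop
  have key : ∀ x, (∫⁻ y, k (x - y) * g y) ^ (2 : ℝ) ≤
      (a ^ ((2 - r) / r) * b ^ ((2 - p) / p)) * ∫⁻ y, k (x - y) ^ r * g y ^ p := by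
    intro x
    have h1 : ∫⁻ y, k (x - y) * g y ≤ (∫⁻ y, k (x - y) ^ r * g y ^ p) ^ (1 / 2 : ℝ) *
        (∫⁻ y, k (x - y) ^ (2 - r) * g y ^ (2 - p)) ^ (1 / 2 : ℝ) := by
      refine le_trans (le_of_eq ?_) (ENNReal.lintegral_mul_norm_pow_le
        (f := fun y => k (x - y) ^ r * g y ^ p)
        (g := fun y => k (x - y) ^ (2 - r) * g y ^ (2 - p)) ?_ ?_
        (by norm_num) (by norm_num) (by norm_num))
      · refine lintegral_congr fun y => ?_
        rw [← ENNReal.mul_rpow_of_nonneg _ _ (by norm_num : (0 : ℝ) ≤ 1 / 2)]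
        have : k (x - y) ^ r * g y ^ p * (k (x - y) ^ (2 - r) * g y ^ (2 - p)) =
            (k (x - y) * g y) ^ (2 : ℝ) := by
          rw [ENNReal.mul_rpow_of_nonneg _ _ (by norm_num : (0 : ℝ) ≤ 2),
            show (2 : ℝ) = r + (2 - r) by ring,
            ENNReal.rpow_add_of_nonneg r (2 - r) hr.le (by linarith)]
          rw [show r + (2 - r) = p + (2 - p) by ring,
            ENNReal.rpow_add_of_nonneg p (2 - p) hp.le (by linarith)]
          rw [show p + (2 - p) - r = 2 - r by ring, show p + (2 - p) - p = 2 - p by ring]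
          ring
        rw [this, ← ENNReal.rpow_mul]; norm_num
      · exact (((hkx x).pow_const _).mul (hg.pow_const _)).aemeasurable
      · exact (((hkx x).pow_const _).mul (hg.pow_const _)).aemeasurable
    have h2 : ∫⁻ y, k (x - y) ^ (2 - r) * g y ^ (2 - p) ≤
        a ^ ((2 - r) / r) * b ^ ((2 - p) / p) := by
      have := ENNReal.lintegral_mul_norm_pow_le (μ := (volume : Measure E2))
        (f := fun y => k (x - y) ^ r) (g := fun y => g y ^ p)
        ((hkx x).pow_const _).aemeasurable (hg.pow_const _).aemeasurable n1 n2 e1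
      rw [lintegral_sub_left_eq_self (fun y => k y ^ r) x] at this
      refine le_trans (le_of_eq ?_) this
      refine lintegral_congr fun y => ?_
      rw [← ENNReal.rpow_mul, ← ENNReal.rpow_mul, mul_div_cancel₀ _ hr.ne', mul_div_cancel₀ _ hp.ne']
    calc (∫⁻ y, k (x - y) * g y) ^ (2 : ℝ) ≤ ((∫⁻ y, k (x - y) ^ r * g y ^ p) ^ (1 / 2 : ℝ) *
        (∫⁻ y, k (x - y) ^ (2 - r) * g y ^ (2 - p)) ^ (1 / 2 : ℝ)) ^ (2 : ℝ) := by gcongr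
      _ = (∫⁻ y, k (x - y) ^ r * g y ^ p) * (∫⁻ y, k (x - y) ^ (2 - r) * g y ^ (2 - p)) := by
        rw [ENNReal.mul_rpow_of_nonneg _ _ (by norm_num : (0 : ℝ) ≤ 2), ← ENNReal.rpow_mul,
          ← ENNReal.rpow_mul]
        norm_num
      _ ≤ _ := by rw [mul_comm]; gcongr
  have tot : ∫⁻ x, (∫⁻ y, k (x - y) * g y) ^ (2 : ℝ) ≤ a ^ (2 / r) * b ^ (2 / p) := by
    calc _ ≤ ∫⁻ x, (a ^ ((2 - r) / r) * b ^ ((2 - p) / p)) * ∫⁻ y, k (x - y) ^ r * g y ^ p :=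
          lintegral_mono key
      _ = (a ^ ((2 - r) / r) * b ^ ((2 - p) / p)) * ∫⁻ x, ∫⁻ y, k (x - y) ^ r * g y ^ p := by
          rw [lintegral_const_mul]
          exact Measurable.lintegral_prod_right' (f := fun z : E2 × E2 => k (z.1 - z.2) ^ r * g z.2 ^ p)
            (by fun_prop)
      _ = (a ^ ((2 - r) / r) * b ^ ((2 - p) / p)) * (a * b) := by
          rw [lintegral_lintegral_swap (Measurable.aemeasurable (by
            show Measurable (fun z : E2 × E2 => k (z.1 - z.2) ^ r * g z.2 ^ p)
            fun_prop))]
          congr 1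
          rw [hb, ← lintegral_const_mul _ (hg.pow_const _)]
          refine lintegral_congr fun y => ?_
          rw [lintegral_mul_const _ (by fun_prop),
            lintegral_sub_right_eq_self (fun x => k x ^ r) y]
      _ = _ := by
          rw [show 2 / r = (2 - r) / r + 1 by field_simp; ring,
            show 2 / p = (2 - p) / p + 1 by field_simp; ring,
            ENNReal.rpow_add_of_nonneg _ _ n1 zero_le_one,
            ENNReal.rpow_add_of_nonneg _ _ n2 zero_le_one, ENNReal.rpow_one, ENNReal.rpow_one]
          ring
  rw [eLpNorm_eq_lintegral_rpow_enorm_toReal (by norm_num) (by norm_num)]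
  simp only [enorm_eq_self, ENNReal.toReal_ofNat]
  calc _ ≤ (a ^ (2 / r) * b ^ (2 / p)) ^ (1 / 2 : ℝ) := by gcongr
    _ = _ := by
      rw [ENNReal.mul_rpow_of_nonneg _ _ (by norm_num), ← ENNReal.rpow_mul, ← ENNReal.rpow_mul]
      congr 2 <;> ring

/-- far kernel -/
def kfar (A γ : ℝ) (z : E2) : ENNReal :=
  ENNReal.ofReal (if 1 ≤ ‖z‖ then A * ‖z‖ ^ (-1 - γ) else 0)

/-- near kernel -/
def knear (A : ℝ) (z : E2) : ENNReal :=
  ENNReal.ofReal (if 1 ≤ ‖z‖ then 0 else A * ‖z‖ ^ (-1 : ℝ))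

lemma kfar_meas (A γ : ℝ) : Measurable (kfar A γ) := by
  unfold kfar
  refine ENNReal.measurable_ofReal.comp (Measurable.ite (measurableSet_le (by fun_prop) (by fun_prop)) ?_ ?_) <;> fun_prop

lemma knear_meas (A : ℝ) : Measurable (knear A) := by
  unfold knear
  refine ENNReal.measurable_ofReal.comp (Measurable.ite (measurableSet_le (by fun_prop) (by fun_prop)) ?_ ?_) <;> fun_prop

lemma kfar_fin (A γ : ℝ) (hA : 0 ≤ A) (hγ : 0 < γ) : ∫⁻ z, kfar A γ z ^ (2 : ℝ) ≠ ⊤ := by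
  have h : Integrable (fun z : E2 => (fun t : ℝ => if 1 ≤ t then A ^ (2 : ℝ) * t ^ (-2 - 2 * γ) else 0) ‖z‖) := by
    rw [integrable_fun_norm_addHaar (μ := (volume : Measure E2)) (f := fun t : ℝ => if 1 ≤ t then A ^ (2 : ℝ) * t ^ (-2 - 2 * γ) else 0)]
    have h1 : IntegrableOn (fun t : ℝ => A ^ (2 : ℝ) * t ^ (-1 - 2 * γ)) (Ici 1) := by
      rw [integrableOn_Ici_iff_integrableOn_Ioi]
      exact (integrableOn_Ioi_rpow_of_lt (by linarith) one_pos).const_mul _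
    have h2 := (integrable_indicator_iff measurableSet_Ici).2 h1
    refine (h2.integrableOn (s := Ioi 0)).congr_fun ?_ measurableSet_Ioi
    intro t ht
    have ht : 0 < t := ht
    simp only [indicator, mem_Ici, finrank_euclideanSpace, Fintype.card_fin, smul_eq_mul]
    split_ifs
    · rw [show -1 - 2 * γ = 1 + (-2 - 2 * γ) by ring, Real.rpow_add ht, Real.rpow_one]; norm_num; ring
    · simp
  have := h.lintegral_lt_top
  refine ne_of_lt (lt_of_le_of_lt (le_of_eq (lintegral_congr fun z => ?_)) this)
  unfold kfar
  rw [ENNReal.ofReal_rpow_of_nonneg (by split_ifs <;> positivity) (by norm_num)]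
  beta_reduce
  split_ifs
  · rw [Real.mul_rpow hA (by positivity), ← Real.rpow_mul (norm_nonneg _)]
    congr 3; ring
  · norm_num

lemma knear_fin (A r : ℝ) (hA : 0 ≤ A) (hr : 0 < r) (hr2 : r < 2) : ∫⁻ z, knear A z ^ r ≠ ⊤ := by
  have h : Integrable (fun z : E2 => (fun t : ℝ => if 1 ≤ t then 0 else A ^ r * t ^ (-r)) ‖z‖) := by
    rw [integrable_fun_norm_addHaar (μ := (volume : Measure E2)) (f := fun t : ℝ => if 1 ≤ t then 0 else A ^ r * t ^ (-r))]
    have h1 : IntegrableOn (fun t : ℝ => A ^ r * t ^ (1 - r)) (Ioo 0 1) :=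
      Integrable.const_mul ((intervalIntegral.integrableOn_Ioo_rpow_iff one_pos).2 (by linarith)) _
    have h2 := (integrable_indicator_iff measurableSet_Ioo).2 h1
    refine (h2.integrableOn (s := Ioi 0)).congr_fun ?_ measurableSet_Ioi
    intro t ht
    have ht : 0 < t := ht
    simp only [indicator, mem_Ioo, finrank_euclideanSpace, Fintype.card_fin, smul_eq_mul, ht, true_and]
    by_cases h : 1 ≤ t
    · simp [h]
    · rw [if_pos (not_le.1 h), if_neg h, show 1 - r = 1 + (-r) by ring, Real.rpow_add ht, Real.rpow_one]; norm_num; ring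
  have := h.lintegral_lt_top
  refine ne_of_lt (lt_of_le_of_lt (le_of_eq (lintegral_congr fun z => ?_)) this)
  unfold knear
  rw [ENNReal.ofReal_rpow_of_nonneg (by split_ifs <;> positivity) hr.le]
  beta_reduce
  split_ifs
  · simp [Real.zero_rpow hr.ne']
  · rw [Real.mul_rpow hA (by positivity), ← Real.rpow_mul (norm_nonneg _)]
    congr 3; ring

/-- pointwise kernel bound -/
lemma kernel_bound (C₀ : ℝ) (hC₀ : 0 < C₀) (α β : ℝ)
    (hβ : 0 < β) (hβα : β < α) (hα : α ≤ 1) (K : E2 → ℝ)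
    (hK : ContDiffOn ℝ 1 K {(0 : E2)}ᶜ)
    (hK0 : ∀ x : E2, x ≠ 0 → |K x| ≤ C₀ * ‖x‖ ^ (-1 : ℝ))
    (hK1 : ∀ x : E2, x ≠ 0 → ‖fderiv ℝ K x‖ ≤ C₀ * ‖x‖ ^ (-2 : ℝ))
    (x y : E2) (hx : 1 ≤ ‖x‖) (hxy : y ≠ x) :
    ‖x‖ ^ β * |K (x - y) - K x| ≤
      ((6 * C₀) * ‖x‖ ^ (-1 - (α - β)) + ((if 1 ≤ ‖x - y‖ then (6 * C₀) * ‖x - y‖ ^ (-1 - (α - β)) else 0)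
        + (if 1 ≤ ‖x - y‖ then 0 else (6 * C₀) * ‖x - y‖ ^ (-1 : ℝ)))) * ‖y‖ ^ α := by
  have hx0 : 0 < ‖x‖ := by linarith
  have hxn : x ≠ 0 := norm_pos_iff.1 hx0
  have hd0 : x - y ≠ 0 := sub_ne_zero.2 hxy.symm
  have hd : 0 < ‖x - y‖ := norm_pos_iff.2 hd0
  have hnn : 0 ≤ (if 1 ≤ ‖x - y‖ then (6 * C₀) * ‖x - y‖ ^ (-1 - (α - β)) else 0)
        + (if 1 ≤ ‖x - y‖ then 0 else (6 * C₀) * ‖x - y‖ ^ (-1 : ℝ)) := by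
    split_ifs <;> positivity
  rcases le_or_gt ‖y‖ (‖x‖ / 2) with h | h
  · -- close case
    have hb : ∀ z ∈ closedBall x (‖x‖ / 2), ‖x‖ / 2 ≤ ‖z‖ := by
      intro z hz
      rw [mem_closedBall, dist_eq_norm] at hz
      have := norm_sub_norm_le x z
      rw [norm_sub_rev] at this
      linarith
    have hb0 : ∀ z ∈ closedBall x (‖x‖ / 2), z ≠ 0 := fun z hz =>
      norm_pos_iff.1 (by have := hb z hz; linarith)
    have hmv : ‖K (x - y) - K x‖ ≤ (C₀ * (‖x‖ / 2) ^ (-2 : ℝ)) * ‖(x - y) - x‖ := by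
      refine Convex.norm_image_sub_le_of_norm_fderiv_le (𝕜 := ℝ) (s := closedBall x (‖x‖ / 2))
        ?_ ?_ (convex_closedBall _ _) (mem_closedBall_self (by positivity)) ?_
      · intro z hz
        exact (hK.differentiableOn (by norm_num)).differentiableAt
          (isOpen_compl_singleton.mem_nhds (hb0 z hz))
      · intro z hz
        refine (hK1 z (hb0 z hz)).trans ?_
        have := Real.rpow_le_rpow_of_nonpos (by positivity) (hb z hz) (by norm_num : (-2 : ℝ) ≤ 0)
        gcongr
      · rw [mem_closedBall, dist_eq_norm]; simpa using h
    have e1 : ‖(x - y) - x‖ = ‖y‖ := by simp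
    have e2 : (‖x‖ / 2) ^ (-2 : ℝ) = 4 * ‖x‖ ^ (-2 : ℝ) := by
      rw [Real.div_rpow hx0.le (by norm_num), Real.rpow_neg (by norm_num : (0 : ℝ) ≤ 2)]
      norm_num; ring
    rw [e1, e2, Real.norm_eq_abs] at hmv
    have e3 : ‖y‖ ≤ ‖y‖ ^ α * ‖x‖ ^ (1 - α) := by
      rcases (norm_nonneg y).eq_or_lt with h0 | h0
      · rw [← h0]; positivity
      · calc ‖y‖ = ‖y‖ ^ α * ‖y‖ ^ (1 - α) := by
              rw [← Real.rpow_add h0]; simp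
          _ ≤ _ := by
            have := Real.rpow_le_rpow h0.le (by linarith : ‖y‖ ≤ ‖x‖) (by linarith : 0 ≤ 1 - α)
            gcongr
    have e4 : ‖x‖ ^ β * (‖x‖ ^ (-2 : ℝ) * ‖x‖ ^ (1 - α)) = ‖x‖ ^ (-1 - (α - β)) := by
      rw [← Real.rpow_add hx0, ← Real.rpow_add hx0]; congr 1; ring
    calc ‖x‖ ^ β * |K (x - y) - K x|
        ≤ ‖x‖ ^ β * (C₀ * (4 * ‖x‖ ^ (-2 : ℝ)) * (‖y‖ ^ α * ‖x‖ ^ (1 - α))) := by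
          have := hmv.trans (mul_le_mul_of_nonneg_left e3 (by positivity))
          gcongr
      _ = 4 * C₀ * (‖x‖ ^ β * (‖x‖ ^ (-2 : ℝ) * ‖x‖ ^ (1 - α))) * ‖y‖ ^ α := by ring
      _ = 4 * C₀ * ‖x‖ ^ (-1 - (α - β)) * ‖y‖ ^ α := by rw [e4]
      _ ≤ _ := by
          have : 4 * C₀ * ‖x‖ ^ (-1 - (α - β)) ≤ 6 * C₀ * ‖x‖ ^ (-1 - (α - β)) := by gcongr; norm_num
          gcongr
          linarith
  · -- far case
    have hy0 : 0 < ‖y‖ := by linarith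
    have hx2 : ‖x‖ ≤ 2 * ‖y‖ := by linarith
    have t1 : ‖x‖ ^ β * |K x| ≤ 6 * C₀ * ‖x‖ ^ (-1 - (α - β)) * ‖y‖ ^ α := by
      have a1 : ‖x‖ ^ α ≤ 2 * ‖y‖ ^ α := by
        calc ‖x‖ ^ α ≤ (2 * ‖y‖) ^ α := Real.rpow_le_rpow hx0.le hx2 (by linarith)
          _ = 2 ^ α * ‖y‖ ^ α := Real.mul_rpow (by norm_num) hy0.le
          _ ≤ _ := by
            have : (2 : ℝ) ^ α ≤ 2 ^ (1 : ℝ) := Real.rpow_le_rpow_of_exponent_le (by norm_num) hα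
            rw [Real.rpow_one] at this
            gcongr
      have a2 : ‖x‖ ^ β * ‖x‖ ^ (-1 : ℝ) = ‖x‖ ^ (-1 - (α - β)) * ‖x‖ ^ α := by
        rw [← Real.rpow_add hx0, ← Real.rpow_add hx0]; congr 1; ring
      calc ‖x‖ ^ β * |K x| ≤ ‖x‖ ^ β * (C₀ * ‖x‖ ^ (-1 : ℝ)) := by gcongr; exact hK0 x hxn
        _ = C₀ * (‖x‖ ^ (-1 - (α - β)) * ‖x‖ ^ α) := by rw [← a2]; ring
        _ ≤ C₀ * (‖x‖ ^ (-1 - (α - β)) * (2 * ‖y‖ ^ α)) := by gcongr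
        _ = 2 * (C₀ * ‖x‖ ^ (-1 - (α - β)) * ‖y‖ ^ α) := by ring
        _ ≤ 6 * (C₀ * ‖x‖ ^ (-1 - (α - β)) * ‖y‖ ^ α) := by gcongr; norm_num
        _ = _ := by ring
    have b1 : ‖x‖ ^ β ≤ 2 ^ β * (‖y‖ ^ (-(α - β)) * ‖y‖ ^ α) := by
      calc ‖x‖ ^ β ≤ (2 * ‖y‖) ^ β := Real.rpow_le_rpow hx0.le hx2 hβ.le
        _ = 2 ^ β * ‖y‖ ^ β := Real.mul_rpow (by norm_num) hy0.le
        _ = _ := by rw [← Real.rpow_add hy0]; congr 2; ring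
    have b2 : (2 : ℝ) ^ β ≤ 2 := by
      have : (2 : ℝ) ^ β ≤ 2 ^ (1 : ℝ) := Real.rpow_le_rpow_of_exponent_le (by norm_num) (by linarith)
      rwa [Real.rpow_one] at this
    have t2 : ‖x‖ ^ β * |K (x - y)| ≤ ((if 1 ≤ ‖x - y‖ then (6 * C₀) * ‖x - y‖ ^ (-1 - (α - β)) else 0)
        + (if 1 ≤ ‖x - y‖ then 0 else (6 * C₀) * ‖x - y‖ ^ (-1 : ℝ))) * ‖y‖ ^ α := by
      have c0 : ‖x‖ ^ β * |K (x - y)| ≤ (2 * (‖y‖ ^ (-(α - β)) * ‖y‖ ^ α)) * (C₀ * ‖x - y‖ ^ (-1 : ℝ)) := by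
        have := b1.trans (mul_le_mul_of_nonneg_right b2 (by positivity))
        exact mul_le_mul this (hK0 _ hd0) (abs_nonneg _) (by positivity)
      have gen : ∀ c : ℝ, 1 ≤ c → c ≤ 3 → ∀ w : ℝ, 0 < w → w / c ≤ ‖y‖ →
          ‖y‖ ^ (-(α - β)) ≤ 3 * w ^ (-(α - β)) := by
        intro c hc hc3 w hw hwy
        have hc0 : 0 < c := by linarith
        calc ‖y‖ ^ (-(α - β)) ≤ (w / c) ^ (-(α - β)) :=
              Real.rpow_le_rpow_of_nonpos (by positivity) hwy (by linarith)
          _ = w ^ (-(α - β)) * c ^ (α - β) := by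
              rw [Real.div_rpow hw.le hc0.le, Real.rpow_neg hc0.le, div_inv_eq_mul]
          _ ≤ w ^ (-(α - β)) * 3 := by
              have : c ^ (α - β) ≤ c ^ (1 : ℝ) := Real.rpow_le_rpow_of_exponent_le hc (by linarith)
              rw [Real.rpow_one] at this
              gcongr
              linarith
          _ = _ := mul_comm _ _
      refine c0.trans ?_
      split_ifs with hh
      · have g1 := gen 3 (by norm_num) le_rfl ‖x - y‖ hd (by
          have := norm_sub_le x y
          linarith)
        have g2 : ‖x - y‖ ^ (-1 - (α - β)) = ‖x - y‖ ^ (-(α - β)) * ‖x - y‖ ^ (-1 : ℝ) := by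
          rw [← Real.rpow_add hd]; congr 1; ring
        calc _ ≤ (2 * ((3 * ‖x - y‖ ^ (-(α - β))) * ‖y‖ ^ α)) * (C₀ * ‖x - y‖ ^ (-1 : ℝ)) := by gcongr
          _ = _ := by rw [g2]; ring
      · have g1 := gen 2 (by norm_num) (by norm_num) 1 one_pos (by linarith)
        rw [Real.one_rpow] at g1
        calc _ ≤ (2 * ((3 * 1) * ‖y‖ ^ α)) * (C₀ * ‖x - y‖ ^ (-1 : ℝ)) := by gcongr
          _ = _ := by ring
    calc ‖x‖ ^ β * |K (x - y) - K x| ≤ ‖x‖ ^ β * (|K (x - y)| + |K x|) := by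
          gcongr; exact abs_sub _ _
      _ = ‖x‖ ^ β * |K x| + ‖x‖ ^ β * |K (x - y)| := by ring
      _ ≤ _ := by rw [add_mul]; exact add_le_add t1 t2

/-- Weighted L² estimate (key2) of the paper for the "bad" part K ∗ f of the gradient of
the velocity, outside the unit ball, under the cancellation condition ∫ f = 0. -/
theorem weighted_L2_convolution_estimate (C₀ : ℝ) (hC₀ : 0 < C₀) (α β : ℝ)
    (hβ : 0 < β) (hβα : β < α) (hα : α ≤ 1) :
    ∃ C : ℝ, 0 < C ∧ ∀ K : E2 → ℝ,
      ContDiffOn ℝ 1 K {(0 : E2)}ᶜ →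
      (∀ x : E2, x ≠ 0 → |K x| ≤ C₀ * ‖x‖ ^ (-1 : ℝ)) →
      (∀ x : E2, x ≠ 0 → ‖fderiv ℝ K x‖ ≤ C₀ * ‖x‖ ^ (-2 : ℝ)) →
      ∀ f : E2 → E2, Integrable f → Integrable (fun y => ‖f y‖ ^ 2) →
        (∫ y : E2, f y) = 0 →
        eLpNorm (fun x => ‖x‖ ^ β * ‖∫ y : E2, K (x - y) • f y‖) 2
            (volume.restrict (ball (0 : E2) 1)ᶜ) ≤
          ENNReal.ofReal C *
            (eLpNorm (fun y => ‖y‖ ^ α * ‖f y‖) (ENNReal.ofReal (4 / (4 - α + β))) volume +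
             eLpNorm (fun y => ‖y‖ ^ α * ‖f y‖) 1 volume) := by
  set γ := α - β with hγd
  have hγ : 0 < γ := by rw [hγd]; linarith
  have hγ1 : γ < 1 := by rw [hγd]; linarith
  set p : ℝ := 4 / (4 - α + β) with hp
  have hpd : p = 4 / (4 - γ) := by rw [hp, hγd]; congr 1; ring
  set r : ℝ := 4 / (2 + γ) with hr
  have hp0 : 0 < p := by rw [hpd]; exact div_pos (by norm_num) (by linarith)
  have hp2 : p ≤ 2 := by rw [hpd, div_le_iff₀ (by linarith)]; linarith
  have hr0 : 0 < r := by positivity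
  have hr2 : r < 2 := by rw [hr, div_lt_iff₀ (by linarith)]; linarith
  have hrp : 1 / r + 1 / p = 3 / 2 := by
    rw [hpd, hr, one_div_div, one_div_div]; ring
  set N1 := (∫⁻ z, kfar (6 * C₀) γ z ^ (2 : ℝ)) ^ (1 / 2 : ℝ) with hN1
  set N2 := (∫⁻ z, knear (6 * C₀) z ^ r) ^ (1 / r) with hN2
  have hN1t : N1 ≠ ⊤ := ENNReal.rpow_ne_top_of_nonneg (by norm_num)
    (kfar_fin _ _ (by positivity) hγ)
  have hN2t : N2 ≠ ⊤ := ENNReal.rpow_ne_top_of_nonneg (by positivity)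
    (knear_fin _ _ (by positivity) hr0 hr2)
  refine ⟨(N1 + N1 + N2).toReal + 1, by positivity, ?_⟩
  intro K hK hK0 hK1 f hf _ hf0
  -- measurable representative of the weighted modulus
  have hgm : AEMeasurable (fun y : E2 => ‖‖y‖ ^ α * ‖f y‖‖ₑ) := by
    have := hf.aestronglyMeasurable.aemeasurable
    fun_prop
  set g := hgm.mk with hg
  have hgmeas : Measurable g := hgm.measurable_mk
  have hge : (fun y : E2 => ‖‖y‖ ^ α * ‖f y‖‖ₑ) =ᵐ[volume] g := hgm.ae_eq_mk
  have norm1 : eLpNorm (fun y => ‖y‖ ^ α * ‖f y‖) 1 volume = ∫⁻ y, g y := by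
    rw [eLpNorm_one_eq_lintegral_enorm]; exact lintegral_congr_ae hge
  have normp : eLpNorm (fun y => ‖y‖ ^ α * ‖f y‖) (ENNReal.ofReal p) volume =
      (∫⁻ y, g y ^ p) ^ (1 / p) := by
    rw [eLpNorm_eq_lintegral_rpow_enorm_toReal (by simpa using hp0) (by simp),
      ENNReal.toReal_ofReal hp0.le]
    congr 1
    refine lintegral_congr_ae (hge.mono fun y hy => ?_)
    simp only at hy ⊢
    rw [hy]
  rw [norm1, normp]
  set G := ∫⁻ y, g y with hG
  set P := (∫⁻ y, g y ^ p) ^ (1 / p) with hP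
  set k1 := kfar (6 * C₀) γ with hk1
  set k2 := knear (6 * C₀) with hk2
  have mk1 : Measurable k1 := kfar_meas _ _
  have mk2 : Measurable k2 := knear_meas _
  set F1 : E2 → ENNReal := fun x => k1 x * G with hF1
  set F2 : E2 → ENNReal := fun x => ∫⁻ y, k1 (x - y) * g y with hF2
  set F3 : E2 → ENNReal := fun x => ∫⁻ y, k2 (x - y) * g y with hF3
  have mF1 : Measurable F1 := mk1.mul_const _
  have mF2 : Measurable F2 := Measurable.lintegral_prod_right'
    (f := fun z : E2 × E2 => k1 (z.1 - z.2) * g z.2) (by fun_prop)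
  have mF3 : Measurable F3 := Measurable.lintegral_prod_right'
    (f := fun z : E2 × E2 => k2 (z.1 - z.2) * g z.2) (by fun_prop)
  have pt : ∀ x : E2, 1 ≤ ‖x‖ →
      ‖‖x‖ ^ β * ‖∫ y : E2, K (x - y) • f y‖‖ₑ ≤ F1 x + (F2 x + F3 x) := by
    intro x hx
    by_cases hi : Integrable (fun y => K (x - y) • f y)
    swap
    · rw [integral_undef hi]; simp
    have e1 : ∫ y : E2, K (x - y) • f y = ∫ y : E2, (K (x - y) - K x) • f y := by
      simp_rw [sub_smul]
      rw [integral_sub hi (g := fun y => K x • f y) (hf.smul (K x)), integral_smul, hf0]; simp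
    have e2 : ‖x‖ ^ β * ‖∫ y : E2, K (x - y) • f y‖ =
        ‖∫ y : E2, ‖x‖ ^ β • ((K (x - y) - K x) • f y)‖ := by
      rw [integral_smul, norm_smul, e1, Real.norm_of_nonneg (by positivity)]
    rw [e2, enorm_norm]
    refine (enorm_integral_le_lintegral_enorm _).trans ?_
    have e3 : F1 x + (F2 x + F3 x) = ∫⁻ y, (k1 x + (k1 (x - y) + k2 (x - y))) * g y := by
      simp only [hF1, hF2, hF3, add_mul]
      rw [lintegral_add_left (by fun_prop), lintegral_add_left (by fun_prop),
        lintegral_const_mul _ hgmeas]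
    rw [e3]
    refine lintegral_mono_ae ?_
    have hne : ∀ᵐ y : E2, y ≠ x := by simp [ae_iff]
    filter_upwards [hge, hne] with y hy hyx
    rw [← hy]
    have hb := kernel_bound C₀ hC₀ α β hβ hβα hα K hK hK0 hK1 x y hx hyx
    rw [← hγd] at hb
    have n1 : 0 ≤ 6 * C₀ * ‖x‖ ^ (-1 - γ) := by positivity
    have n2 : 0 ≤ (if 1 ≤ ‖x - y‖ then (6 * C₀) * ‖x - y‖ ^ (-1 - γ) else 0) := by
      split_ifs <;> positivity
    have n3 : 0 ≤ (if 1 ≤ ‖x - y‖ then 0 else (6 * C₀) * ‖x - y‖ ^ (-1 : ℝ)) := by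
      split_ifs <;> positivity
    simp only [hk1, hk2, kfar, knear, if_pos hx]
    rw [← ENNReal.ofReal_add n2 n3, ← ENNReal.ofReal_add n1 (add_nonneg n2 n3),
      Real.enorm_of_nonneg (by positivity), ← ENNReal.ofReal_mul (by positivity), ← ofReal_norm]
    refine ENNReal.ofReal_le_ofReal ?_
    rw [norm_smul, norm_smul, Real.norm_of_nonneg (by positivity : 0 ≤ ‖x‖ ^ β), Real.norm_eq_abs,
      ← mul_assoc, ← mul_assoc]
    exact mul_le_mul_of_nonneg_right hb (norm_nonneg _)
  have b1 : eLpNorm F1 2 volume ≤ N1 * G := by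
    rw [eLpNorm_eq_lintegral_rpow_enorm_toReal (by norm_num) (by norm_num)]
    simp only [enorm_eq_self, ENNReal.toReal_ofNat, hF1]
    simp_rw [ENNReal.mul_rpow_of_nonneg _ _ (by norm_num : (0 : ℝ) ≤ 2)]
    rw [lintegral_mul_const _ (by fun_prop), ENNReal.mul_rpow_of_nonneg _ _ (by norm_num),
      ← ENNReal.rpow_mul]
    norm_num [hN1]
  have b2 : eLpNorm F2 2 volume ≤ N1 * G := by
    have := young_two k1 g mk1 hgmeas 2 1 (by norm_num) le_rfl one_pos (by norm_num) (by norm_num)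
    simpa [hN1, hG] using this
  have b3 : eLpNorm F3 2 volume ≤ N2 * P :=
    young_two k2 g mk2 hgmeas r p hr0 hr2.le hp0 hp2 hrp
  calc _ ≤ eLpNorm (F1 + (F2 + F3)) 2 (volume.restrict (ball (0 : E2) 1)ᶜ) := by
        refine eLpNorm_mono_enorm_ae ?_
        refine (ae_restrict_iff' measurableSet_ball.compl).2 (Filter.Eventually.of_forall ?_)
        intro x hx
        have hx : 1 ≤ ‖x‖ := by simpa using hx
        simpa using pt x hx
    _ ≤ eLpNorm (F1 + (F2 + F3)) 2 volume := eLpNorm_restrict_le _ _ _ _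
    _ ≤ eLpNorm F1 2 volume + (eLpNorm F2 2 volume + eLpNorm F3 2 volume) :=
        (eLpNorm_add_le mF1.aestronglyMeasurable (mF2.add mF3).aestronglyMeasurable
          (by norm_num)).trans (by
          gcongr
          exact eLpNorm_add_le mF2.aestronglyMeasurable mF3.aestronglyMeasurable (by norm_num))
    _ ≤ N1 * G + (N1 * G + N2 * P) := by gcongr
    _ ≤ (N1 + N1 + N2) * (P + G) := by
        have : (N1 + N1 + N2) * (P + G) =
          (N1 * G + (N1 * G + N2 * P)) + (N1 * P + N1 * P + N2 * G) := by ring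
        rw [this]; exact le_self_add
    _ ≤ _ := by
        gcongr
        rw [ENNReal.ofReal_add (by positivity) (by norm_num), ENNReal.ofReal_toReal (by
          simp [hN1t, hN2t])]
        exact le_self_add
end
end

section
/- (Persistence of mass near the origin for a short time.) Let N ≥ 1, M > 0 and T > 0. Let u : ℝ²×[0,T] → ℝ² be continuously differentiable, and let ρ ∈ C¹(ℝ²×[0,T]) be nonnegative with spatial support contained in a fixed compact set for all t, satisfying the continuity equation ρ_t + div(ρu) = 0 pointwise on ℝ²×[0,T]. Assume that ∫_{B_N} ρ(x,0) dx ≥ 1/2 and that sup_{0≤t≤T} ∫_{ℝ²} ρ|u|²(x,t) dx ≤ M. Then there exists a positive time T₁ depending only on M, N and ‖ρ(·,0)‖_{L¹(ℝ²)} such that for all 0 ≤ t ≤ min(T, T₁), ∫_{B_{2N}} ρ(x,t) dx ≥ 1/4. -/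
open MeasureTheory Real Set Metric

noncomputable section

lemma hasFDerivAt_coord {V : E2 → E2} (hV : ContDiff ℝ 1 V) (i : Fin 2) (x v : E2) :
    fderiv ℝ (fun y => V y i) x v = fderiv ℝ V x v i := by
  have h1 := (hV.differentiable one_ne_zero x).hasFDerivAt
  have h2 := ((EuclideanSpace.proj (𝕜 := ℝ) i : E2 →L[ℝ] ℝ).hasFDerivAt (x := V x)).comp x h1
  have h3 : HasFDerivAt (fun y => V y i)
    ((EuclideanSpace.proj (𝕜 := ℝ) i : E2 →L[ℝ] ℝ).comp (fderiv ℝ V x)) x := h2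
  rw [h3.fderiv]
  simp

lemma sum_coord (v : E2) : v = ∑ i, v i • e2 i := by
  ext j
  fin_cases j <;> simp [e2, Fin.sum_univ_two]

lemma div2_continuous {V : E2 → E2} (hV : ContDiff ℝ 1 V) : Continuous (div2 V) := by
  unfold div2
  have := hV.continuous_fderiv one_ne_zero
  fun_prop

lemma div2_zero {V : E2 → E2} {K : Set E2} (hK : IsClosed K)
    (hV0 : ∀ x ∉ K, V x = 0) (x : E2) (hx : x ∉ K) : div2 V x = 0 := by
  have : V =ᶠ[nhds x] fun _ => 0 := by
    filter_upwards [hK.isOpen_compl.mem_nhds hx] with y hy using hV0 y hy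
  simp [div2, this.fderiv_eq]

lemma ibp {φ : E2 → ℝ} {V : E2 → E2} (hφ : ContDiff ℝ 1 φ) (hV : ContDiff ℝ 1 V)
    (hc : HasCompactSupport V) :
    ∫ x, φ x * div2 V x = - ∫ x, fderiv ℝ φ x (V x) := by
  have hci : ∀ i, HasCompactSupport (fun y => V y i) := fun i =>
    hc.comp_left (g := fun v : E2 => v i) rfl
  have hVi : ∀ i, ContDiff ℝ 1 (fun y => V y i) := fun i => by fun_prop
  have cφ := hφ.continuous_fderiv one_ne_zero
  have cφ0 := hφ.continuous
  have i1 : ∀ i, Integrable (fun x => fderiv ℝ φ x (e2 i) * V x i) := fun i => by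
    apply Continuous.integrable_of_hasCompactSupport
    · have := (hVi i).continuous
      fun_prop
    · exact (hci i).mul_left
  have i2 : ∀ i, Integrable (fun x => φ x * fderiv ℝ (fun y => V y i) x (e2 i)) := fun i => by
    apply Continuous.integrable_of_hasCompactSupport
    · have := (hVi i).continuous_fderiv one_ne_zero
      fun_prop
    · exact ((hci i).fderiv_apply (𝕜 := ℝ) (e2 i)).mul_left
  have i3 : ∀ i, Integrable (fun x => φ x * V x i) := fun i => by
    apply Continuous.integrable_of_hasCompactSupport
    · have := (hVi i).continuous
      fun_prop
    · exact (hci i).mul_left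
  have key : ∀ i, ∫ x, φ x * fderiv ℝ (fun y => V y i) x (e2 i)
      = - ∫ x, fderiv ℝ φ x (e2 i) * V x i := fun i =>
    integral_mul_fderiv_eq_neg_fderiv_mul_of_integrable (i1 i) (i2 i) (i3 i)
      (fun x _ => hφ.differentiable one_ne_zero x)
      (fun x _ => (hVi i).differentiable one_ne_zero x)
  have e1 : (fun x => φ x * div2 V x)
      = fun x => ∑ i, φ x * fderiv ℝ (fun y => V y i) x (e2 i) := by
    funext x
    simp only [div2, Finset.mul_sum, hasFDerivAt_coord hV]
  have e3 : (fun x => fderiv ℝ φ x (V x)) = fun x => ∑ i, fderiv ℝ φ x (e2 i) * V x i := by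
    funext x
    conv_lhs => rw [sum_coord (V x)]
    simp [mul_comm]
  rw [e1, e3, integral_finsetSum _ (fun i _ => i2 i), integral_finsetSum _ (fun i _ => i1 i),
    ← Finset.sum_neg_distrib]
  exact Finset.sum_congr rfl fun i _ => key i

lemma deriv_time {ρ : ℝ → E2 → ℝ} (hρ : ContDiff ℝ 1 (fun q : ℝ × E2 => ρ q.1 q.2))
    (t : ℝ) (x : E2) :
    HasDerivAt (fun s => ρ s x)
      (fderiv ℝ (fun q : ℝ × E2 => ρ q.1 q.2) (t, x) ((1 : ℝ), (0 : E2))) t := by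
  have h1 := (hρ.differentiable one_ne_zero (t, x)).hasFDerivAt
  have h2 : HasDerivAt (fun s : ℝ => (s, x)) ((1 : ℝ), (0 : E2)) t :=
    (hasDerivAt_id t).prodMk (hasDerivAt_const t x)
  exact h1.comp_hasDerivAt t h2

lemma deriv_F {ρ : ℝ → E2 → ℝ} (hρ : ContDiff ℝ 1 (fun q : ℝ × E2 => ρ q.1 q.2))
    {K : Set E2} (hK : IsCompact K) {φ : E2 → ℝ} (hφ : Continuous φ) (t : ℝ) :
    HasDerivAt (fun s => ∫ x in K, φ x * ρ s x)
      (∫ x in K, φ x * deriv (fun s => ρ s x) t) t := by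
  have hd : ∀ s x, deriv (fun s => ρ s x) s
      = fderiv ℝ (fun q : ℝ × E2 => ρ q.1 q.2) (s, x) ((1 : ℝ), (0 : E2)) :=
    fun s x => (deriv_time hρ s x).deriv
  have cF := hρ.continuous_fderiv one_ne_zero
  have cD : Continuous (fun q : ℝ × E2 => φ q.2 * deriv (fun s => ρ s q.2) q.1) := by
    simp only [hd]
    fun_prop
  have cR := hρ.continuous
  have cρ : ∀ s, Continuous (fun x => φ x * ρ s x) := fun s =>
    hφ.mul (cR.comp (by fun_prop : Continuous (fun x : E2 => (s, x))))
  have cD1 : ∀ s, Continuous (fun x => φ x * deriv (fun s => ρ s x) s) := fun s =>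
    cD.comp (by fun_prop : Continuous (fun x : E2 => (s, x)))
  obtain ⟨C, hC⟩ := ((isCompact_closedBall t 1).prod hK).exists_bound_of_continuousOn
    cD.continuousOn
  refine (hasDerivAt_integral_of_dominated_loc_of_deriv_le (μ := volume.restrict K)
    (F := fun s x => φ x * ρ s x)
    (F' := fun s x => φ x * deriv (fun s => ρ s x) s) (bound := fun _ => C)
    (closedBall_mem_nhds t one_pos) ?_ ?_ ?_ ?_ ?_ ?_).2
  · exact Filter.Eventually.of_forall fun s => (cρ s).aestronglyMeasurable
  · exact (cρ t).continuousOn.integrableOn_compact hK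
  · exact (cD1 t).aestronglyMeasurable
  · filter_upwards [ae_restrict_mem hK.measurableSet] with x hx s hs
    exact hC (s, x) ⟨hs, hx⟩
  · exact continuousOn_const.integrableOn_compact hK
  · refine Filter.Eventually.of_forall fun x s _ => ?_
    have := (deriv_time hρ s x).const_mul (φ x)
    rwa [← hd] at this

lemma deriv_G {ρ : ℝ → E2 → ℝ} {u : ℝ → E2 → E2}
    (hu : ContDiff ℝ 1 (fun q : ℝ × E2 => u q.1 q.2))
    (hρ : ContDiff ℝ 1 (fun q : ℝ × E2 => ρ q.1 q.2))
    {K : Set E2} (hK : IsCompact K) {φ : E2 → ℝ} (hφ : ContDiff ℝ 1 φ) (t : ℝ)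
    (h0 : ∀ x ∉ K, ρ t x = 0)
    (hpde : ∀ x, deriv (fun s => ρ s x) t + div2 (fun y => ρ t y • u t y) x = 0) :
    HasDerivAt (fun s => ∫ x in K, φ x * ρ s x)
      (∫ x, ρ t x * fderiv ℝ φ x (u t x)) t := by
  have hVc : ContDiff ℝ 1 (fun y => ρ t y • u t y) := by
    have a : ContDiff ℝ 1 (fun x : E2 => (t, x)) := by fun_prop
    exact (hρ.comp a).smul (hu.comp a)
  have hV0 : ∀ x ∉ K, (fun y => ρ t y • u t y) x = 0 := fun x hx => by simp [h0 x hx]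
  have h := deriv_F hρ hK hφ.continuous t
  have e : ∫ x in K, φ x * deriv (fun s => ρ s x) t = ∫ x, ρ t x * fderiv ℝ φ x (u t x) := by
    have e1 : (fun x => φ x * deriv (fun s => ρ s x) t)
        = fun x => - (φ x * div2 (fun y => ρ t y • u t y) x) := by
      funext x
      rw [eq_neg_of_add_eq_zero_left (hpde x)]
      ring
    rw [e1, setIntegral_eq_integral_of_forall_compl_eq_zero, integral_neg,
      ibp hφ hVc (HasCompactSupport.intro hK hV0), neg_neg]
    · simp
    · intro x hx
      rw [div2_zero hK.isClosed hV0 x hx]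
      simp
  rwa [e] at h

/-- Persistence of mass near the origin for a short time (estimate (t2) of the paper):
if ∫_{B_N} ρ(0) ≥ 1/2 and ∫ ρ|u|² ≤ M on [0,T], then there is a time T₁ depending only on
M, N and ‖ρ(0)‖_{L¹} such that ∫_{B_{2N}} ρ(t) ≥ 1/4 for 0 ≤ t ≤ min(T,T₁). -/
theorem mass_persistence (N : ℝ) (hN : 1 ≤ N) (M L : ℝ) (hM : 0 < M) (hL : 0 < L) :
    ∃ T₁ : ℝ, 0 < T₁ ∧ ∀ T : ℝ, 0 < T →
      ∀ (u : ℝ → E2 → E2) (ρ : ℝ → E2 → ℝ),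
        ContDiff ℝ 1 (fun q : ℝ × E2 => u q.1 q.2) →
        ContDiff ℝ 1 (fun q : ℝ × E2 => ρ q.1 q.2) →
        (∀ t ∈ Icc (0 : ℝ) T, ∀ x, 0 ≤ ρ t x) →
        (∃ Kset : Set E2, IsCompact Kset ∧ ∀ t ∈ Icc (0 : ℝ) T, ∀ x ∉ Kset, ρ t x = 0) →
        (∀ t ∈ Icc (0 : ℝ) T, ∀ x : E2,
          deriv (fun s => ρ s x) t + div2 (fun y => ρ t y • u t y) x = 0) →
        (1 / 2 : ℝ) ≤ (∫ x in ball (0 : E2) N, ρ 0 x) →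
        (∀ t ∈ Icc (0 : ℝ) T, (∫ x : E2, ρ t x * ‖u t x‖ ^ 2) ≤ M) →
        (∫ x : E2, ρ 0 x) = L →
        ∀ t ∈ Icc (0 : ℝ) (min T T₁),
          (1 / 4 : ℝ) ≤ ∫ x in ball (0 : E2) (2 * N), ρ t x := by
  have hN0 : 0 < N := by linarith
  let f : ContDiffBump (0 : E2) := ⟨N, 2 * N, hN0, by linarith⟩
  have hf : ContDiff ℝ 1 f := f.contDiff
  obtain ⟨C, hC⟩ := (hf.continuous_fderiv one_ne_zero).bounded_above_of_compact_support
    (f.hasCompactSupport.fderiv (𝕜 := ℝ))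
  have hC0 : 0 ≤ C := (norm_nonneg _).trans (hC 0)
  have hD : 0 < C * ((L + M) / 2) + 1 := by positivity
  refine ⟨1 / 4 / (C * ((L + M) / 2) + 1), by positivity, ?_⟩
  rintro T hT u ρ hu hρ hpos ⟨K, hK, hK0⟩ hpde hhalf hM' hmass t ⟨ht0, htT⟩
  have htT0 : t ≤ T := htT.trans (min_le_left _ _)
  have htT1 := htT.trans (min_le_right _ _)
  rw [le_div_iff₀ hD] at htT1
  have cρ : ∀ s, Continuous (ρ s) := fun s =>
    hρ.continuous.comp (by fun_prop : Continuous (fun x : E2 => (s, x)))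
  have cu : ∀ s, Continuous (u s) := fun s =>
    hu.continuous.comp (by fun_prop : Continuous (fun x : E2 => (s, x)))
  have iI : ∀ s ∈ Icc (0 : ℝ) T, ∀ g : E2 → ℝ, Continuous g →
      Integrable (fun x => ρ s x * g x) := fun s hs g hg => by
    apply Continuous.integrable_of_hasCompactSupport ((cρ s).mul hg)
    exact HasCompactSupport.intro hK fun x hx => by simp [hK0 s hs x hx]
  have iρ : ∀ s ∈ Icc (0 : ℝ) T, Integrable (ρ s) := fun s hs => by
    simpa using iI s hs (fun _ => 1) continuous_const
  have hset : ∀ s ∈ Icc (0 : ℝ) T, ∀ g : E2 → ℝ, ∫ x in K, g x * ρ s x = ∫ x, g x * ρ s x :=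
    fun s hs g => setIntegral_eq_integral_of_forall_compl_eq_zero
      fun x hx => by simp [hK0 s hs x hx]
  have mem0 : (0 : ℝ) ∈ Icc (0 : ℝ) T := ⟨le_rfl, hT.le⟩
  -- conservation of mass
  have hcons : ∀ s ∈ Icc (0 : ℝ) T, ∫ x, ρ s x = L := by
    intro s hs
    have hder : ∀ r ∈ Icc (0 : ℝ) T,
        HasDerivAt (fun s => ∫ x in K, (1 : ℝ) * ρ s x) 0 r := fun r hr => by
      have := deriv_G hu hρ hK (φ := fun _ => 1) contDiff_const r (hK0 r hr) (hpde r hr)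
      simpa using this
    have h := constant_of_has_deriv_right_zero (a := 0) (b := T)
      (f := fun s => ∫ x in K, (1 : ℝ) * ρ s x)
      (fun r hr => (hder r hr).continuousAt.continuousWithinAt)
      (fun r hr => (hder r ⟨hr.1, hr.2.le⟩).hasDerivWithinAt) s hs
    rw [hset s hs (fun _ => 1), hset 0 mem0 (fun _ => 1)] at h
    simp only [one_mul] at h
    rw [h, hmass]
  have hder : ∀ r ∈ Icc (0 : ℝ) T, HasDerivAt (fun s => ∫ x in K, f x * ρ s x)
      (∫ x, ρ r x * fderiv ℝ f x (u r x)) r := fun r hr =>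
    deriv_G hu hρ hK hf r (hK0 r hr) (hpde r hr)
  have hbd : ∀ r ∈ Icc (0 : ℝ) T,
      -(C * ((L + M) / 2)) ≤ ∫ x, ρ r x * fderiv ℝ f x (u r x) := by
    intro r hr
    have cf := hf.continuous_fderiv one_ne_zero
    have cur := cu r
    have i2 := iI r hr (fun x => ‖u r x‖ ^ 2) (by fun_prop)
    have i1 := iI r hr (fun x => fderiv ℝ f x (u r x)) (by fun_prop)
    have i3 : Integrable (fun x => -(C / 2) * (ρ r x + ρ r x * ‖u r x‖ ^ 2)) :=
      ((iρ r hr).add i2).const_mul _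
    have h := integral_mono i3 i1 (fun x => by
      have a := hpos r hr x
      have b : |fderiv ℝ f x (u r x)| ≤ C * ‖u r x‖ :=
        (ContinuousLinearMap.le_opNorm _ _).trans
          (mul_le_mul_of_nonneg_right (hC x) (norm_nonneg _))
      have b' := (abs_le.1 b).1
      have c : C * ‖u r x‖ ≤ C / 2 * (1 + ‖u r x‖ ^ 2) := by
        nlinarith [mul_nonneg hC0 (sq_nonneg (‖u r x‖ - 1))]
      have d : -(C / 2 * (1 + ‖u r x‖ ^ 2)) ≤ fderiv ℝ f x (u r x) := by linarith
      have e := mul_le_mul_of_nonneg_left d a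
      show -(C / 2) * (ρ r x + ρ r x * ‖u r x‖ ^ 2) ≤ ρ r x * fderiv ℝ f x (u r x)
      linarith)
    rw [integral_const_mul, integral_add (iρ r hr) i2, hcons r hr] at h
    have := mul_le_mul_of_nonneg_left (hM' r hr) hC0
    linarith
  have hmv := Convex.mul_sub_le_image_sub_of_le_deriv (convex_Icc (0 : ℝ) T)
    (f := fun s => ∫ x in K, f x * ρ s x) (C := -(C * ((L + M) / 2)))
    (fun r hr => (hder r hr).continuousAt.continuousWithinAt)
    (fun r hr => (hder r (interior_subset hr)).differentiableAt.differentiableWithinAt)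
    (fun r hr => by
      rw [(hder r (interior_subset hr)).deriv]
      exact hbd r (interior_subset hr)) 0 mem0 t ⟨ht0, htT0⟩ ht0
  rw [hset t ⟨ht0, htT0⟩ f, hset 0 mem0 f] at hmv
  have ifρ : ∀ s ∈ Icc (0 : ℝ) T, Integrable (fun x => f x * ρ s x) := fun s hs => by
    simpa [mul_comm] using iI s hs f hf.continuous
  have hlow : ∫ x in ball (0 : E2) N, ρ 0 x ≤ ∫ x, f x * ρ 0 x := by
    rw [← integral_indicator measurableSet_ball]
    refine integral_mono ((iρ 0 mem0).indicator measurableSet_ball) (ifρ 0 mem0) fun x => ?_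
    by_cases hx : x ∈ ball (0 : E2) N
    · have : f x = 1 := f.one_of_mem_closedBall (ball_subset_closedBall hx)
      simp [hx, this, indicator_of_mem]
    · rw [indicator_of_notMem hx]
      exact mul_nonneg f.nonneg (hpos 0 mem0 x)
  have hup : ∫ x, f x * ρ t x ≤ ∫ x in ball (0 : E2) (2 * N), ρ t x := by
    rw [← integral_indicator measurableSet_ball]
    refine integral_mono (ifρ t ⟨ht0, htT0⟩)
      ((iρ t ⟨ht0, htT0⟩).indicator measurableSet_ball) fun x => ?_
    by_cases hx : x ∈ ball (0 : E2) (2 * N)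
    · rw [indicator_of_mem hx]
      exact mul_le_of_le_one_left (hpos t ⟨ht0, htT0⟩ x) f.le_one
    · have : f x = 0 := f.zero_of_le_dist (not_lt.1 hx)
      simp [hx, this]
  nlinarith
end
end
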